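/- arXiv:2306.05825 — 5 statements merged into one kernel-verified Lean document; each statement's English description precedes it below -/
import Mathlib

section
/- The weighted Sobolev space 𝓗¹(Ω), equipped with the inner product (u,v)_{𝓗¹} = ∫_Ω uv + (y^{α₁}∂ₓu)(y^{α₁}∂ₓv) + (x^{α₂}∂_yu)(x^{α₂}∂_yv) dxdy, is a Hilbert space; in particular, every sequence in 𝓗¹(Ω) that is Cauchy with respect to the norm ‖u‖_{𝓗¹} converges in this norm to an element of 𝓗¹(Ω). -/
open MeasureTheory Set Filter

noncomputable section

/-- The open unit square `Ω = (0,1) × (0,1)` in `ℝ²`. -/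
def Omega : Set (ℝ × ℝ) := Ioo (0:ℝ) 1 ×ˢ Ioo (0:ℝ) 1

/-- Test functions on a set `s`: smooth with compact support contained in `s`. -/
def IsTestOn (s : Set (ℝ × ℝ)) (φ : ℝ × ℝ → ℝ) : Prop :=
  ContDiff ℝ (⊤ : ℕ∞) φ ∧ HasCompactSupport φ ∧ tsupport φ ⊆ s

/-- Classical partial derivative in the `x`-direction. -/
def pdx (φ : ℝ × ℝ → ℝ) (p : ℝ × ℝ) : ℝ := fderiv ℝ φ p (1, 0)

/-- Classical partial derivative in the `y`-direction. -/
def pdy (φ : ℝ × ℝ → ℝ) (p : ℝ × ℝ) : ℝ := fderiv ℝ φ p (0, 1)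

/-- `g` is a weak `x`-partial derivative of `u` on `s`. -/
def HasWeakDerivXOn (s : Set (ℝ × ℝ)) (u g : ℝ × ℝ → ℝ) : Prop :=
  LocallyIntegrableOn u s volume ∧ LocallyIntegrableOn g s volume ∧
  ∀ φ : ℝ × ℝ → ℝ, IsTestOn s φ →
    ∫ p in s, u p * pdx φ p = - ∫ p in s, g p * φ p

/-- `g` is a weak `y`-partial derivative of `u` on `s`. -/
def HasWeakDerivYOn (s : Set (ℝ × ℝ)) (u g : ℝ × ℝ → ℝ) : Prop :=
  LocallyIntegrableOn u s volume ∧ LocallyIntegrableOn g s volume ∧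
  ∀ φ : ℝ × ℝ → ℝ, IsTestOn s φ →
    ∫ p in s, u p * pdy φ p = - ∫ p in s, g p * φ p

/-- Test functions on `Ω`. -/
def IsTest (φ : ℝ × ℝ → ℝ) : Prop := IsTestOn Omega φ

/-- Membership in the weighted Sobolev space `𝓗¹(Ω)`, with weak derivatives `gx, gy`:
`u ∈ L²(Ω)`, `gx = ∂ₓu`, `gy = ∂_y u` weakly, and `y^α₁ gx, x^α₂ gy ∈ L²(Ω)`. -/
structure MemH1 (α₁ α₂ : ℝ) (u gx gy : ℝ × ℝ → ℝ) : Prop where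
  memL2 : MemLp u 2 (volume.restrict Omega)
  weakX : HasWeakDerivXOn Omega u gx
  weakY : HasWeakDerivYOn Omega u gy
  wgx : MemLp (fun p => p.2 ^ α₁ * gx p) 2 (volume.restrict Omega)
  wgy : MemLp (fun p => p.1 ^ α₂ * gy p) 2 (volume.restrict Omega)

/-- The `𝓗¹(Ω)` norm of `u` (with weak derivatives `gx, gy`). -/
def H1Norm (α₁ α₂ : ℝ) (u gx gy : ℝ × ℝ → ℝ) : ℝ :=
  Real.sqrt ((∫ p in Omega, (u p) ^ 2) +
    (∫ p in Omega, (p.2 ^ α₁ * gx p) ^ 2) +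
    (∫ p in Omega, (p.1 ^ α₂ * gy p) ^ 2))

/-- Membership in `𝓗₀¹(Ω)`: member of `𝓗¹(Ω)` approximable in the `𝓗¹` norm by
test functions. -/
def MemH10 (α₁ α₂ : ℝ) (u gx gy : ℝ × ℝ → ℝ) : Prop :=
  MemH1 α₁ α₂ u gx gy ∧
  ∀ ε : ℝ, 0 < ε → ∃ φ : ℝ × ℝ → ℝ, IsTest φ ∧
    H1Norm α₁ α₂ (fun p => u p - φ p) (fun p => gx p - pdx φ p)
      (fun p => gy p - pdy φ p) < ε

/-- Membership in `H₀(Ω) = {u ∈ 𝓗₀¹(Ω) : ∫_Ω V u² < ∞}`. -/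
def MemH0 (α₁ α₂ : ℝ) (V u gx gy : ℝ × ℝ → ℝ) : Prop :=
  MemH10 α₁ α₂ u gx gy ∧
  IntegrableOn (fun p => V p * (u p) ^ 2) Omega volume

/-- The bilinear form `a(u,v)` associated with the sub-elliptic operator with potential `V`. -/
def aForm (α₁ α₂ : ℝ) (V u gx gy v hx hy : ℝ × ℝ → ℝ) : ℝ :=
  ∫ p in Omega, ((p.2 ^ α₁ * gx p) * (p.2 ^ α₁ * hx p) +
    (p.1 ^ α₂ * gy p) * (p.1 ^ α₂ * hy p) + V p * u p * v p)

/-- The bilinear form `a₁(u,v)` (no potential). -/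
def a1Form (α₁ α₂ : ℝ) (u gx gy v hx hy : ℝ × ℝ → ℝ) : ℝ :=
  ∫ p in Omega, ((p.2 ^ α₁ * gx p) * (p.2 ^ α₁ * hx p) +
    (p.1 ^ α₂ * gy p) * (p.1 ^ α₂ * hy p))

/-- Membership in `S_p = {V ∈ L^p(Ω) : V ≥ 0 a.e., ‖V‖_{L^p(Ω)} ≤ M}`. -/
def MemSp (ppow M : ℝ) (V : ℝ × ℝ → ℝ) : Prop :=
  MemLp V (ENNReal.ofReal ppow) (volume.restrict Omega) ∧
  (∀ᵐ p ∂(volume.restrict Omega), 0 ≤ V p) ∧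
  eLpNorm V (ENNReal.ofReal ppow) (volume.restrict Omega) ≤ ENNReal.ofReal M

/-- `u` (with weak derivatives `gx, gy`) is an eigenfunction of the sub-elliptic operator
with potential `V` for the eigenvalue `lam`. -/
def IsEigenfun (α₁ α₂ : ℝ) (V : ℝ × ℝ → ℝ) (lam : ℝ) (u gx gy : ℝ × ℝ → ℝ) : Prop :=
  MemH0 α₁ α₂ V u gx gy ∧
  ∀ v hx hy : ℝ × ℝ → ℝ, MemH0 α₁ α₂ V v hx hy →
    aForm α₁ α₂ V u gx gy v hx hy = lam * ∫ p in Omega, u p * v p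

/-- The first eigenvalue `λ₁(V) = inf { a(u,u) : u ∈ H₀(Ω), ‖u‖_{L²} = 1 }`. -/
def lam1 (α₁ α₂ : ℝ) (V : ℝ × ℝ → ℝ) : ℝ :=
  sInf { r | ∃ u gx gy : ℝ × ℝ → ℝ, MemH0 α₁ α₂ V u gx gy ∧
    (∫ p in Omega, (u p) ^ 2) = 1 ∧ r = aForm α₁ α₂ V u gx gy u gx gy }

/-- `sup { a(u,u) : u ∈ span(φ), ‖u‖_{L²(Ω)} = 1 }` for a finite family `φ` with
weak derivatives `φx, φy`. -/
def rayleighSup (α₁ α₂ : ℝ) (V : ℝ × ℝ → ℝ) {k : ℕ} (φ φx φy : Fin k → ℝ × ℝ → ℝ) : ℝ :=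
  sSup { s | ∃ c : Fin k → ℝ,
    (∫ p in Omega, (∑ i, c i * φ i p) ^ 2) = 1 ∧
    s = aForm α₁ α₂ V (fun p => ∑ i, c i * φ i p) (fun p => ∑ i, c i * φx i p)
      (fun p => ∑ i, c i * φy i p) (fun p => ∑ i, c i * φ i p)
      (fun p => ∑ i, c i * φx i p) (fun p => ∑ i, c i * φy i p) }

/-- The set of values `sup { a(u,u) : u ∈ E, ‖u‖ = 1 }` over `k`-dimensional
subspaces `E` of `H₀(Ω)` (represented by `L²(Ω)`-linearly independent families of
`k` elements of `H₀(Ω)`). -/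
def minmaxSet (α₁ α₂ : ℝ) (V : ℝ × ℝ → ℝ) (k : ℕ) : Set ℝ :=
  { r | ∃ φ φx φy : Fin k → ℝ × ℝ → ℝ,
      (∀ i, MemH0 α₁ α₂ V (φ i) (φx i) (φy i)) ∧
      (∀ c : Fin k → ℝ, (∀ᵐ p ∂(volume.restrict Omega), ∑ i, c i * φ i p = 0) → c = 0) ∧
      r = rayleighSup α₁ α₂ V φ φx φy }

/-- The `k`-th eigenvalue via the min-max principle. -/
def lamk (α₁ α₂ : ℝ) (V : ℝ × ℝ → ℝ) (k : ℕ) : ℝ := sInf (minmaxSet α₁ α₂ V k)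

/-- Membership in `U = (𝓗₀¹(Ω) ∩ L^{2q}(Ω)) \ {0}`. -/
def MemU (α₁ α₂ qe : ℝ) (u gx gy : ℝ × ℝ → ℝ) : Prop :=
  MemH10 α₁ α₂ u gx gy ∧
  MemLp u (ENNReal.ofReal (2 * qe)) (volume.restrict Omega) ∧
  ¬ (∀ᵐ p ∂(volume.restrict Omega), u p = 0)

/-- The functional `J(u) = (a₁(u,u) + M ‖u‖_{L^{2q}(Ω)}²) / ‖u‖_{L²(Ω)}²`. -/
def Jfun (α₁ α₂ M qe : ℝ) (u gx gy : ℝ × ℝ → ℝ) : ℝ :=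
  (a1Form α₁ α₂ u gx gy u gx gy +
    M * (∫ p in Omega, |u p| ^ (2 * qe)) ^ (1 / qe)) / (∫ p in Omega, (u p) ^ 2)

lemma aux_inner {μ : Measure (ℝ × ℝ)} {f g : ℝ × ℝ → ℝ} (hf : MemLp f 2 μ) (hg : MemLp g 2 μ) :
    inner ℝ (hf.toLp f) (hg.toLp g) = ∫ p, f p * g p ∂μ := by
  rw [L2.inner_def]
  apply integral_congr_ae
  filter_upwards [hf.coeFn_toLp, hg.coeFn_toLp] with p h1 h2
  rw [h1, h2]
  simp [mul_comm]

lemma aux_norm {μ : Measure (ℝ × ℝ)} {f : ℝ × ℝ → ℝ} (hf : MemLp f 2 μ) :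
    ‖hf.toLp f‖ ^ 2 = ∫ p, (f p) ^ 2 ∂μ := by
  rw [← real_inner_self_eq_norm_sq, aux_inner]
  simp [sq]

lemma aux_complete {μ : Measure (ℝ × ℝ)} (f : ℕ → ℝ × ℝ → ℝ) (hf : ∀ n, MemLp (f n) 2 μ)
    (hc : ∀ ε : ℝ, 0 < ε → ∃ N : ℕ, ∀ m ≥ N, ∀ n ≥ N, ∫ p, (f m p - f n p) ^ 2 ∂μ < ε ^ 2) :
    ∃ F : ℝ × ℝ → ℝ, MemLp F 2 μ ∧
      Tendsto (fun n => ∫ p, (f n p - F p) ^ 2 ∂μ) atTop (nhds 0) ∧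
      ∀ ψ, MemLp ψ 2 μ → Tendsto (fun n => ∫ p, f n p * ψ p ∂μ) atTop
        (nhds (∫ p, F p * ψ p ∂μ)) := by
  have hC : CauchySeq (fun n => (hf n).toLp (f n)) := by
    rw [Metric.cauchySeq_iff]
    intro ε hε
    obtain ⟨N, hN⟩ := hc ε hε
    refine ⟨N, fun m hm n hn => ?_⟩
    rw [dist_eq_norm, ← MemLp.toLp_sub]
    have := hN m hm n hn
    refine lt_of_pow_lt_pow_left₀ 2 hε.le ?_
    rw [aux_norm]
    exact this
  obtain ⟨G, hG⟩ := cauchySeq_tendsto_of_complete hC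
  have hGm := Lp.memLp G
  have hGe : hGm.toLp G = G := Lp.toLp_coeFn G hGm
  refine ⟨G, hGm, ?_, ?_⟩
  · have h1 : Tendsto (fun n => ‖(hf n).toLp (f n) - G‖ ^ 2) atTop (nhds 0) := by
      have := (tendsto_iff_norm_sub_tendsto_zero.1 hG).pow 2
      simpa using this
    refine h1.congr fun n => ?_
    conv_lhs => rw [← hGe]
    rw [← MemLp.toLp_sub, aux_norm]
    rfl
  · intro ψ hψ
    have h1 := hG.inner (𝕜 := ℝ) (tendsto_const_nhds (x := hψ.toLp ψ))
    rw [← hGe, aux_inner] at h1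
    exact h1.congr fun n => aux_inner _ _

lemma aux_open : IsOpen Omega := isOpen_Ioo.prod isOpen_Ioo

instance aux_fin : IsFiniteMeasure (volume.restrict Omega : Measure (ℝ × ℝ)) := by
  refine ⟨?_⟩
  rw [Measure.restrict_apply_univ]
  exact (((Metric.isBounded_Ioo (0:ℝ) 1).prod (Metric.isBounded_Ioo (0:ℝ) 1))).measure_lt_top

lemma aux_locint {F : ℝ × ℝ → ℝ} (hF : MemLp F 2 (volume.restrict Omega)) :
    LocallyIntegrableOn F Omega volume :=
  IntegrableOn.locallyIntegrableOn (hF.integrable (by norm_num))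

/-- quotient of a continuous compactly supported function by the weight is L2 -/
lemma aux_div {w φ : ℝ × ℝ → ℝ} (hw : ContinuousOn w Omega) (hpos : ∀ p ∈ Omega, 0 < w p)
    (hφ : Continuous φ) (hcs : HasCompactSupport φ) (hs : tsupport φ ⊆ Omega) :
    MemLp (fun p => (w p)⁻¹ * φ p) 2 (volume.restrict Omega) := by
  have hco : ContinuousOn (fun p => (w p)⁻¹ * φ p) Omega :=
    (hw.inv₀ fun p hp => (hpos p hp).ne').mul hφ.continuousOn
  obtain ⟨C, hC⟩ := hcs.isCompact.exists_bound_of_continuousOn (hco.mono hs)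
  refine MemLp.of_bound (hco.aestronglyMeasurable aux_open.measurableSet) (max C 0) ?_
  refine Eventually.of_forall fun p => ?_
  by_cases hp : p ∈ tsupport φ
  · exact (hC p hp).trans (le_max_left _ _)
  · simp [image_eq_zero_of_notMem_tsupport hp]

/-- the limit of weighted derivatives -/
lemma aux_limit {w F : ℝ × ℝ → ℝ} {u g : ℕ → ℝ × ℝ → ℝ} {v φ ψ : ℝ × ℝ → ℝ}
    (hw : ContinuousOn w Omega) (hpos : ∀ p ∈ Omega, 0 < w p)
    (hu : ∀ ψ, MemLp ψ 2 (volume.restrict Omega) →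
      Tendsto (fun n => ∫ p in Omega, u n p * ψ p) atTop (nhds (∫ p in Omega, v p * ψ p)))
    (hg : ∀ ψ, MemLp ψ 2 (volume.restrict Omega) →
      Tendsto (fun n => ∫ p in Omega, (w p * g n p) * ψ p) atTop
        (nhds (∫ p in Omega, F p * ψ p)))
    (hφ : Continuous φ) (hcs : HasCompactSupport φ) (hs : tsupport φ ⊆ Omega)
    (hψ : Continuous ψ) (hψc : HasCompactSupport ψ)
    (h : ∀ n, ∫ p in Omega, u n p * ψ p = - ∫ p in Omega, g n p * φ p) :
    ∫ p in Omega, v p * ψ p = - ∫ p in Omega, ((w p)⁻¹ * F p) * φ p := by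
  have h1 := hu ψ ((hψ.memLp_of_hasCompactSupport hψc).restrict _)
  have h2 := (hg _ (aux_div hw hpos hφ hcs hs)).neg
  have e : ∫ p in Omega, F p * ((w p)⁻¹ * φ p) = ∫ p in Omega, ((w p)⁻¹ * F p) * φ p := by
    congr 1; ext p; ring
  rw [e] at h2
  refine tendsto_nhds_unique h1 (h2.congr fun n => ?_)
  rw [h n]
  congr 1
  refine setIntegral_congr_fun aux_open.measurableSet fun p hp => ?_
  have := (hpos p hp).ne'
  field_simp

lemma aux_locint_div {w F : ℝ × ℝ → ℝ} (hw : ContinuousOn w Omega) (hpos : ∀ p ∈ Omega, 0 < w p)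
    (hF : MemLp F 2 (volume.restrict Omega)) :
    LocallyIntegrableOn (fun p => (w p)⁻¹ * F p) Omega volume :=
  (aux_locint hF).continuousOn_mul (hw.inv₀ fun p hp => (hpos p hp).ne')
    aux_open.isLocallyClosed

lemma aux_mem {w F : ℝ × ℝ → ℝ} (hpos : ∀ p ∈ Omega, 0 < w p)
    (hF : MemLp F 2 (volume.restrict Omega)) :
    MemLp (fun p => w p * ((w p)⁻¹ * F p)) 2 (volume.restrict Omega) := by
  refine (memLp_congr_ae ?_).1 hF
  filter_upwards [ae_restrict_mem aux_open.measurableSet] with p hp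
  rw [mul_inv_cancel_left₀ (hpos p hp).ne']

lemma aux_int {w F g : ℝ × ℝ → ℝ} (hpos : ∀ p ∈ Omega, 0 < w p) :
    ∫ p in Omega, (w p * g p - F p) ^ 2 =
      ∫ p in Omega, (w p * (g p - (w p)⁻¹ * F p)) ^ 2 := by
  refine setIntegral_congr_fun aux_open.measurableSet fun p hp => ?_
  rw [mul_sub, mul_inv_cancel_left₀ (hpos p hp).ne']

lemma aux_pd {φ : ℝ × ℝ → ℝ} (h : IsTestOn Omega φ) (e : ℝ × ℝ) :
    Continuous (fun p => fderiv ℝ φ p e) ∧ HasCompactSupport (fun p => fderiv ℝ φ p e) := by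
  refine ⟨(h.1.continuous_fderiv (by simp)).clm_apply continuous_const, ?_⟩
  exact h.2.1.fderiv_apply ℝ e

/-- `𝓗¹(Ω)` with its inner-product norm is a Hilbert space: every
Cauchy sequence (together with its weak derivatives) converges in the `𝓗¹` norm to an
element of `𝓗¹(Ω)`. -/
theorem H1_complete (α₁ α₂ : ℝ) (hα₁ : α₁ ∈ Ioo (0:ℝ) (1/2)) (hα₂ : α₂ ∈ Ioo (0:ℝ) (1/2))
    (u gx gy : ℕ → ℝ × ℝ → ℝ)
    (hmem : ∀ n, MemH1 α₁ α₂ (u n) (gx n) (gy n))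
    (hcau : ∀ ε : ℝ, 0 < ε → ∃ N : ℕ, ∀ m ≥ N, ∀ n ≥ N,
      H1Norm α₁ α₂ (fun p => u m p - u n p) (fun p => gx m p - gx n p)
        (fun p => gy m p - gy n p) < ε) :
    ∃ v hx hy : ℝ × ℝ → ℝ, MemH1 α₁ α₂ v hx hy ∧
      Tendsto (fun n => H1Norm α₁ α₂ (fun p => u n p - v p)
        (fun p => gx n p - hx p) (fun p => gy n p - hy p)) atTop (nhds 0) := by
  have hp1 : ∀ p ∈ Omega, 0 < (fun p : ℝ × ℝ => p.2 ^ α₁) p :=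
    fun p hp => Real.rpow_pos_of_pos hp.2.1 _
  have hp2 : ∀ p ∈ Omega, 0 < (fun p : ℝ × ℝ => p.1 ^ α₂) p :=
    fun p hp => Real.rpow_pos_of_pos hp.1.1 _
  have hc1 : ContinuousOn (fun p : ℝ × ℝ => p.2 ^ α₁) Omega :=
    continuousOn_snd.rpow_const fun p hp => Or.inl hp.2.1.ne'
  have hc2 : ContinuousOn (fun p : ℝ × ℝ => p.1 ^ α₂) Omega :=
    continuousOn_fst.rpow_const fun p hp => Or.inl hp.1.1.ne'
  have key : ∀ ε : ℝ, 0 < ε → ∃ N : ℕ, ∀ m ≥ N, ∀ n ≥ N,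
      (∫ p in Omega, (u m p - u n p) ^ 2) < ε ^ 2 ∧
      (∫ p in Omega, (p.2 ^ α₁ * gx m p - p.2 ^ α₁ * gx n p) ^ 2) < ε ^ 2 ∧
      (∫ p in Omega, (p.1 ^ α₂ * gy m p - p.1 ^ α₂ * gy n p) ^ 2) < ε ^ 2 := by
    intro ε hε
    obtain ⟨N, hN⟩ := hcau ε hε
    refine ⟨N, fun m hm n hn => ?_⟩
    have := hN m hm n hn
    rw [H1Norm, Real.sqrt_lt' hε] at this
    simp only [← mul_sub]
    have a1 : 0 ≤ ∫ p in Omega, (u m p - u n p) ^ 2 := integral_nonneg fun p => sq_nonneg _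
    have a2 : 0 ≤ ∫ p in Omega, (p.2 ^ α₁ * (gx m p - gx n p)) ^ 2 :=
      integral_nonneg fun p => sq_nonneg _
    have a3 : 0 ≤ ∫ p in Omega, (p.1 ^ α₂ * (gy m p - gy n p)) ^ 2 :=
      integral_nonneg fun p => sq_nonneg _
    refine ⟨by linarith, by linarith, by linarith⟩
  obtain ⟨v, hv, hvt, hvw⟩ := aux_complete u (fun n => (hmem n).memL2) fun ε hε => by
    obtain ⟨N, hN⟩ := key ε hε
    exact ⟨N, fun m hm n hn => (hN m hm n hn).1⟩
  obtain ⟨F, hF, hFt, hFw⟩ := aux_complete (fun n p => p.2 ^ α₁ * gx n p)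
      (fun n => (hmem n).wgx) fun ε hε => by
    obtain ⟨N, hN⟩ := key ε hε
    exact ⟨N, fun m hm n hn => (hN m hm n hn).2.1⟩
  obtain ⟨G, hG, hGt, hGw⟩ := aux_complete (fun n p => p.1 ^ α₂ * gy n p)
      (fun n => (hmem n).wgy) fun ε hε => by
    obtain ⟨N, hN⟩ := key ε hε
    exact ⟨N, fun m hm n hn => (hN m hm n hn).2.2⟩
  refine ⟨v, fun p => (p.2 ^ α₁)⁻¹ * F p, fun p => (p.1 ^ α₂)⁻¹ * G p, ⟨hv, ?_, ?_, ?_, ?_⟩, ?_⟩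
  · refine ⟨aux_locint hv, aux_locint_div hc1 hp1 hF, fun φ hφ => ?_⟩
    exact aux_limit hc1 hp1 hvw hFw hφ.1.continuous hφ.2.1 hφ.2.2 (aux_pd hφ _).1 (aux_pd hφ _).2
      fun n => (hmem n).weakX.2.2 φ hφ
  · refine ⟨aux_locint hv, aux_locint_div hc2 hp2 hG, fun φ hφ => ?_⟩
    exact aux_limit hc2 hp2 hvw hGw hφ.1.continuous hφ.2.1 hφ.2.2 (aux_pd hφ _).1 (aux_pd hφ _).2
      fun n => (hmem n).weakY.2.2 φ hφ
  · exact aux_mem hp1 hF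
  · exact aux_mem hp2 hG
  · have h := ((hvt.add hFt).add hGt).sqrt
    simp only [add_zero, Real.sqrt_zero] at h
    refine h.congr fun n => ?_
    rw [H1Norm]
    congr 2
    · congr 1
      exact aux_int hp1
    · exact aux_int hp2
end
end

section
/- Let δ satisfy 1/2 ≤ δ < min{1/(α₁+1), 1/(α₂+1)}. Then there exists a constant C > 0 such that for every u ∈ C_c^∞(Ω), ‖u‖_{L^{2δ/(1−δ)}(Ω)} ≤ C (∫_Ω |y^{α₁}∂ₓu|² + |x^{α₂}∂_yu|² dxdy)^{1/2}. -/
open MeasureTheory Set Filter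

noncomputable section

lemma ws_gagl (V Dx Dy : ℝ × ℝ → ENNReal) (hDx : Measurable Dx) (hDy : Measurable Dy)
    (hx : ∀ x y, V (x, y) ≤ ∫⁻ t, Dx (t, y)) (hy : ∀ x y, V (x, y) ≤ ∫⁻ t, Dy (x, t)) :
    ∫⁻ p in Omega, V p * V p ≤ (∫⁻ p, Dx p) * (∫⁻ p, Dy p) := by
  have hA : Measurable (fun y => ∫⁻ t, Dx (t, y)) := hDx.lintegral_prod_left'
  have hB : Measurable (fun x => ∫⁻ t, Dy (x, t)) := hDy.lintegral_prod_right'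
  calc ∫⁻ p in Omega, V p * V p ≤ ∫⁻ p, V p * V p := setLIntegral_le_lintegral _ _
    _ ≤ ∫⁻ p : ℝ × ℝ, (∫⁻ t, Dy (p.1, t)) * (∫⁻ t, Dx (t, p.2)) := by
        apply lintegral_mono
        intro p
        exact mul_le_mul' (hy p.1 p.2) (hx p.1 p.2)
    _ = (∫⁻ x, ∫⁻ t, Dy (x, t)) * (∫⁻ y, ∫⁻ t, Dx (t, y)) := by
        rw [Measure.volume_eq_prod]
        exact lintegral_prod_mul hB.aemeasurable hA.aemeasurable
    _ = (∫⁻ p, Dy p) * (∫⁻ p, Dx p) := by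
        rw [Measure.volume_eq_prod, lintegral_prod _ hDy.aemeasurable,
          lintegral_prod_symm _ hDx.aemeasurable]
    _ = _ := mul_comm _ _

lemma ws_wy (V Dy : ℝ × ℝ → ENNReal) (w : ℝ → ENNReal) (hw : Measurable w) (hDy : Measurable Dy)
    (hy : ∀ x y, V (x, y) ≤ ∫⁻ t, Dy (x, t)) :
    ∫⁻ p in Omega, w p.2 * V p ≤ (∫⁻ y in Ioo (0:ℝ) 1, w y) * (∫⁻ p, Dy p) := by
  have hB : Measurable (fun x => ∫⁻ t, Dy (x, t)) := hDy.lintegral_prod_right'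
  calc ∫⁻ p in Omega, w p.2 * V p ≤ ∫⁻ p in Omega, (∫⁻ t, Dy (p.1, t)) * w p.2 := by
        apply lintegral_mono
        intro p
        simp only
        rw [mul_comm]
        exact mul_le_mul' (hy p.1 p.2) le_rfl
    _ = (∫⁻ x in Ioo (0:ℝ) 1, ∫⁻ t, Dy (x, t)) * (∫⁻ y in Ioo (0:ℝ) 1, w y) := by
        rw [Measure.volume_eq_prod, Omega, ← Measure.prod_restrict]
        exact lintegral_prod_mul hB.aemeasurable hw.aemeasurable
    _ ≤ (∫⁻ x, ∫⁻ t, Dy (x, t)) * (∫⁻ y in Ioo (0:ℝ) 1, w y) := by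
        gcongr
        exact Measure.restrict_le_self
    _ = _ := by
        rw [Measure.volume_eq_prod, lintegral_prod _ hDy.aemeasurable, mul_comm]

lemma ws_wx (V Dx : ℝ × ℝ → ENNReal) (w : ℝ → ENNReal) (hw : Measurable w) (hDx : Measurable Dx)
    (hx : ∀ x y, V (x, y) ≤ ∫⁻ t, Dx (t, y)) :
    ∫⁻ p in Omega, w p.1 * V p ≤ (∫⁻ y in Ioo (0:ℝ) 1, w y) * (∫⁻ p, Dx p) := by
  have hA : Measurable (fun y => ∫⁻ t, Dx (t, y)) := hDx.lintegral_prod_left'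
  calc ∫⁻ p in Omega, w p.1 * V p ≤ ∫⁻ p in Omega, w p.1 * (∫⁻ t, Dx (t, p.2)) := by
        apply lintegral_mono
        intro p
        exact mul_le_mul' le_rfl (hx p.1 p.2)
    _ = (∫⁻ y in Ioo (0:ℝ) 1, w y) * (∫⁻ y in Ioo (0:ℝ) 1, ∫⁻ t, Dx (t, y)) := by
        rw [Measure.volume_eq_prod, Omega, ← Measure.prod_restrict]
        exact lintegral_prod_mul hw.aemeasurable hA.aemeasurable
    _ ≤ (∫⁻ y in Ioo (0:ℝ) 1, w y) * (∫⁻ y, ∫⁻ t, Dx (t, y)) := by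
        gcongr
        exact Measure.restrict_le_self
    _ = _ := by
        rw [Measure.volume_eq_prod, lintegral_prod_symm _ hDx.aemeasurable]

lemma ws_holder (s : ℝ) (hs : 2 ≤ s) (F D w : ℝ × ℝ → ENNReal) (hF : Measurable F)
    (hD : Measurable D) (hw : Measurable w) (hw0 : ∀ p ∈ Omega, w p ≠ 0)
    (hwt : ∀ p ∈ Omega, w p ≠ ⊤) :
    ∫⁻ p in Omega, F p ^ (s-1) * D p ≤ (∫⁻ p in Omega, (w p * D p)^(2:ℝ)) ^ (1/2:ℝ) *
      ((∫⁻ p in Omega, F p ^ s * F p ^ s) ^ (1/2-1/s) *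
       (∫⁻ p in Omega, w p ^ (-s) * F p ^ s)^(1/s)) := by
  have hs0 : 0 < s := by linarith
  have h1s : 1 / s ≤ 1/2 := one_div_le_one_div_of_le (by norm_num) hs
  have h1s0 : 0 < 1/s := by positivity
  set G : Fin 3 → ℝ × ℝ → ENNReal := ![fun p => (w p * D p)^(2:ℝ), fun p => F p ^ s * F p ^ s,
    fun p => w p ^ (-s) * F p ^ s] with hG
  set q : Fin 3 → ℝ := ![1/2, 1/2-1/s, 1/s] with hq
  have key := ENNReal.lintegral_prod_norm_pow_le (μ := volume.restrict Omega) Finset.univ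
    (f := G) (p := q) ?_ ?_ ?_
  · simp only [Fin.prod_univ_three, hG, hq, Matrix.cons_val_zero, Matrix.cons_val_one,
      Matrix.cons_val_two, Matrix.head_cons, Matrix.tail_cons, Matrix.cons_val] at key
    rw [mul_assoc] at key
    refine le_trans (le_of_eq ?_) key
    apply setLIntegral_congr_fun (measurableSet_Ioo.prod measurableSet_Ioo)
    intro p hp
    have h0 := hw0 p hp
    have ht := hwt p hp
    simp only
    rw [← ENNReal.rpow_mul, ← ENNReal.rpow_add_of_nonneg _ _ hs0.le hs0.le, ← ENNReal.rpow_mul,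
      ENNReal.mul_rpow_of_nonneg _ _ h1s0.le, ← ENNReal.rpow_mul, ← ENNReal.rpow_mul]
    have e1 : (2:ℝ) * (1/2) = 1 := by norm_num
    have e2 : -s * (1/s) = -1 := by field_simp
    have e3 : s * (1/s) = 1 := by field_simp
    have e4 : (s+s)*(1/2-1/s) = s - 2 := by field_simp; ring
    rw [e1, e2, e3, e4, ENNReal.rpow_one, ENNReal.rpow_neg_one, 
      show s - 1 = (s-2) + 1 by ring, ENNReal.rpow_add_of_nonneg _ _ (by linarith) (by norm_num)]
    calc _ = (w p * (w p)⁻¹) * (F p ^ (s-2) * F p ^ (1:ℝ) * D p) := by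
            rw [ENNReal.mul_inv_cancel h0 ht, one_mul]
      _ = _ := by ring
  · intro i _
    fin_cases i <;> simp [hG] <;> fun_prop
  · simp [hq, Fin.sum_univ_three]; ring
  · intro i _
    fin_cases i <;> simp [hq] <;> norm_num at h1s ⊢ <;> linarith

lemma ws_algebra (s : ℝ) (hs : 2 ≤ s) (a b I G H c₁ c₂ k : ENNReal) (ha : a ≠ ⊤) (hb : b ≠ ⊤)
    (hI : I ≤ a * b)
    (h1 : a ≤ k * (G ^ (1/2:ℝ) * (I ^ (1/2-1/s) * (c₁ * b) ^ (1/s))))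
    (h2 : b ≤ k * (H ^ (1/2:ℝ) * (I ^ (1/2-1/s) * (c₂ * a) ^ (1/s)))) :
    I ^ (1/s) ≤ k * k * (c₁ * c₂) ^ (1/s) * (G + H) := by
  have hs0 : 0 < s := by linarith
  have h1s : 1 / s ≤ 1/2 := one_div_le_one_div_of_le (by norm_num) hs
  have h1s0 : 0 < 1/s := by positivity
  refine (ENNReal.rpow_le_rpow hI h1s0.le).trans ?_
  set m := a * b with hm
  have hmt : m ≠ ⊤ := ENNReal.mul_ne_top ha hb
  by_cases hm0 : m = 0
  · rw [hm0, ENNReal.zero_rpow_of_pos h1s0]; exact zero_le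
  have hGH : G ^ (1/2:ℝ) * H ^ (1/2:ℝ) ≤ G + H := by
    calc G ^ (1/2:ℝ) * H ^ (1/2:ℝ) ≤ (G+H) ^ (1/2:ℝ) * (G+H) ^ (1/2:ℝ) := by
          gcongr <;> simp
      _ = G + H := by
          rw [← ENNReal.rpow_add_of_nonneg _ _ (by norm_num) (by norm_num)]; norm_num
  have key : m ≤ (k * k * (c₁ * c₂) ^ (1/s) * (G + H)) * m ^ (1 - 1/s) := by
    calc m ≤ _ := mul_le_mul' h1 h2
      _ = k * k * (c₁ * c₂) ^ (1/s) * (G ^ (1/2:ℝ) * H ^ (1/2:ℝ)) *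
          ((I ^ (1/2-1/s) * I ^ (1/2-1/s)) * m ^ (1/s)) := by
          rw [hm]
          simp only [ENNReal.mul_rpow_of_nonneg _ _ h1s0.le]
          ring
      _ ≤ k * k * (c₁ * c₂) ^ (1/s) * (G + H) *
          ((m ^ (1/2-1/s) * m ^ (1/2-1/s)) * m ^ (1/s)) := by
          have : 0 ≤ 1/2 - 1/s := by linarith
          gcongr
      _ = _ := by
          rw [← ENNReal.rpow_add _ _ hm0 hmt, ← ENNReal.rpow_add _ _ hm0 hmt]
          congr 2; ring
  have h3 : m ^ (1/s) * m ^ (1 - 1/s) = m := by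
    rw [← ENNReal.rpow_add _ _ hm0 hmt]; norm_num
  have hne0 : m ^ (1 - 1/s) ≠ 0 := by
    simp [ENNReal.rpow_eq_zero_iff, hm0, hmt]
  have hnet : m ^ (1 - 1/s) ≠ ⊤ := by
    simp [ENNReal.rpow_eq_top_iff, hm0, hmt]
  rw [← ENNReal.mul_le_mul_iff_left hne0 hnet, h3]
  exact key

/-- the constant is finite -/
lemma ws_const (α s : ℝ) (h : α * s < 1) :
    ∫⁻ y in Ioo (0:ℝ) 1, (ENNReal.ofReal (y ^ α)) ^ (-s) ≠ ⊤ := by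
  have h1 : IntegrableOn (fun y : ℝ => y ^ (-(α * s))) (Ioo 0 1) volume := by
    have := intervalIntegral.intervalIntegrable_rpow' (r := -(α * s)) (a := 0) (b := 1) (by linarith)
    rw [intervalIntegrable_iff_integrableOn_Ioo_of_le (by norm_num)] at this
    exact this
  have h2 := h1.lintegral_lt_top
  rw [← lt_top_iff_ne_top]
  refine lt_of_le_of_lt (le_of_eq ?_) h2
  apply setLIntegral_congr_fun measurableSet_Ioo
  intro y hy
  simp only
  rw [ENNReal.ofReal_rpow_of_pos (Real.rpow_pos_of_pos hy.1 _), ← Real.rpow_mul hy.1.le]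
  congr 2; ring

lemma ws_slice_x (v : ℝ × ℝ → ℝ) (hv : ContDiff ℝ 1 v) (hc : HasCompactSupport v) (x y : ℝ) :
    ‖v (x, y)‖ₑ ≤ ∫⁻ t, ‖fderiv ℝ v (t, y) (1, 0)‖ₑ := by
  have h1 : ContDiff ℝ 1 (fun t => v (t, y)) := hv.comp (contDiff_id.prodMk contDiff_const)
  have hcl : Topology.IsClosedEmbedding (fun t : ℝ => (t, y)) := by
    refine ⟨isEmbedding_prodMkLeft y, ?_⟩
    have : range (fun t : ℝ => (t, y)) = Prod.snd ⁻¹' {y} := by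
      ext ⟨a, b⟩; simp [eq_comm]
    rw [this]
    exact isClosed_singleton.preimage continuous_snd
  have h2 : HasCompactSupport (fun t => v (t, y)) := hc.comp_isClosedEmbedding hcl
  refine (h2.enorm_le_lintegral_Ici_deriv h1 x).trans ((setLIntegral_le_lintegral _ _).trans ?_)
  apply lintegral_mono
  intro t
  have hd : HasDerivAt (fun t => v (t, y)) (fderiv ℝ v (t, y) (1, 0)) t :=
    ((hv.differentiable one_ne_zero) (t, y)).hasFDerivAt.comp_hasDerivAt t
      ((hasDerivAt_id t).prodMk (hasDerivAt_const t y))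
  simp only
  rw [hd.deriv]

lemma ws_slice_y (v : ℝ × ℝ → ℝ) (hv : ContDiff ℝ 1 v) (hc : HasCompactSupport v) (x y : ℝ) :
    ‖v (x, y)‖ₑ ≤ ∫⁻ t, ‖fderiv ℝ v (x, t) (0, 1)‖ₑ := by
  have h1 : ContDiff ℝ 1 (fun t => v (x, t)) := hv.comp (contDiff_const.prodMk contDiff_id)
  have hcl : Topology.IsClosedEmbedding (fun t : ℝ => (x, t)) := by
    refine ⟨isEmbedding_prodMkRight x, ?_⟩
    have : range (fun t : ℝ => (x, t)) = Prod.fst ⁻¹' {x} := by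
      ext ⟨a, b⟩; simp [eq_comm]
    rw [this]
    exact isClosed_singleton.preimage continuous_fst
  have h2 : HasCompactSupport (fun t => v (x, t)) := hc.comp_isClosedEmbedding hcl
  refine (h2.enorm_le_lintegral_Ici_deriv h1 y).trans ((setLIntegral_le_lintegral _ _).trans ?_)
  apply lintegral_mono
  intro t
  have hd : HasDerivAt (fun t => v (x, t)) (fderiv ℝ v (x, t) (0, 1)) t :=
    ((hv.differentiable one_ne_zero) (x, t)).hasFDerivAt.comp_hasDerivAt t
      ((hasDerivAt_const t x).prodMk (hasDerivAt_id t))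
  simp only
  rw [hd.deriv]

lemma ws_fderiv (u : ℝ × ℝ → ℝ) (hu : Differentiable ℝ u) (s : ℝ) (hs : 2 ≤ s) (p e : ℝ × ℝ) :
    ‖fderiv ℝ (fun p => |u p| ^ s) p e‖ₑ =
      ENNReal.ofReal s * (‖u p‖ₑ ^ (s-1) * ‖fderiv ℝ u p e‖ₑ) := by
  have h := (hasDerivAt_abs_rpow (u p) (p := s) (by linarith)).comp_hasFDerivAt p
    (hu p).hasFDerivAt
  have h' : fderiv ℝ (fun p => |u p| ^ s) p = (s * |u p| ^ (s - 2) * u p) • fderiv ℝ u p :=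
    h.fderiv
  rw [h', smul_apply, smul_eq_mul, enorm_mul, enorm_mul, enorm_mul,
    Real.enorm_eq_ofReal (by linarith : 0 ≤ s), mul_assoc, mul_assoc]
  congr 1
  rw [← mul_assoc]
  congr 1
  rw [Real.enorm_eq_ofReal (by positivity), Real.enorm_eq_ofReal_abs,
    ← ENNReal.ofReal_mul (by positivity), ENNReal.ofReal_rpow_of_nonneg (abs_nonneg _) (by linarith)]
  congr 1
  rw [show s - 1 = (s-2) + 1 by ring, Real.rpow_add_of_nonneg (abs_nonneg _) (by linarith) 
    (by norm_num), Real.rpow_one]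

lemma ws_main (α₁ α₂ s : ℝ) (hs : 2 ≤ s) (hα₁ : 0 < α₁) (hα₂ : 0 < α₂) (u : ℝ × ℝ → ℝ)
    (hu : IsTest u) :
    (∫⁻ p in Omega, ‖u p‖ₑ ^ (2*s)) ^ (1/s) ≤
      ENNReal.ofReal s * ENNReal.ofReal s *
        ((∫⁻ y in Ioo (0:ℝ) 1, (ENNReal.ofReal (y ^ α₁)) ^ (-s)) *
         (∫⁻ y in Ioo (0:ℝ) 1, (ENNReal.ofReal (y ^ α₂)) ^ (-s))) ^ (1/s) *
      (∫⁻ p in Omega, ENNReal.ofReal ((p.2 ^ α₁ * pdx u p) ^ 2 + (p.1 ^ α₂ * pdy u p) ^ 2)) := by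
  obtain ⟨hsm, hcs, hsub⟩ := hu
  have hs0 : 0 < s := by linarith
  have hu1 : ContDiff ℝ 1 u := hsm.of_le (by exact_mod_cast le_top)
  have hud : Differentiable ℝ u := hu1.differentiable one_ne_zero
  set v : ℝ × ℝ → ℝ := fun p => |u p| ^ s with hv
  have hv1 : ContDiff ℝ 1 v := hu1.norm_rpow (by linarith)
  have hvc : HasCompactSupport v := by
    apply hcs.comp_left (g := fun t => |t| ^ s)
    simp [hs0.ne']
  have hucont := hu1.continuous
  have hfc : Continuous (fderiv ℝ u) := hu1.continuous_fderiv one_ne_zero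
  have hvfc : Continuous (fderiv ℝ v) := hv1.continuous_fderiv one_ne_zero
  have hvE : ∀ p, ‖v p‖ₑ = ‖u p‖ₑ ^ s := by
    intro p
    rw [hv, Real.enorm_eq_ofReal (by positivity), Real.enorm_eq_ofReal_abs,
      ENNReal.ofReal_rpow_of_nonneg (abs_nonneg _) hs0.le]
  have hΩ : MeasurableSet Omega := measurableSet_Ioo.prod measurableSet_Ioo
  have hfull : ∀ e, ∫⁻ p, ‖fderiv ℝ v p e‖ₑ =
      ENNReal.ofReal s * ∫⁻ p in Omega, ‖u p‖ₑ ^ (s-1) * ‖fderiv ℝ u p e‖ₑ := by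
    intro e
    rw [← lintegral_const_mul _ (by fun_prop)]
    simp_rw [← ws_fderiv u hud s hs]
    rw [setLIntegral_eq_of_support_subset]
    intro p hp
    apply hsub
    by_contra hcon
    have : u p = 0 := image_eq_zero_of_notMem_tsupport hcon
    have h0 : fderiv ℝ u p = 0 := by
      by_contra h
      exact hcon (support_fderiv_subset ℝ h)
    apply hp
    beta_reduce
    rw [ws_fderiv u hud s hs, h0]
    simp
  have hfin : ∀ e, ∫⁻ p, ‖fderiv ℝ v p e‖ₑ ≠ ⊤ := by
    intro e
    have : Integrable (fun p => fderiv ℝ v p e) volume := by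
      apply Continuous.integrable_of_hasCompactSupport (by fun_prop)
      exact hvc.fderiv_apply ℝ e
    exact this.2.ne
  have hx := ws_slice_x v hv1 hvc
  have hy := ws_slice_y v hv1 hvc
  have mx : Measurable (fun p => ‖fderiv ℝ v p (1,0)‖ₑ) := by fun_prop
  have my : Measurable (fun p => ‖fderiv ℝ v p (0,1)‖ₑ) := by fun_prop
  have hg := ws_gagl (fun p => ‖v p‖ₑ) _ _ mx my hx hy
  have hwm : ∀ α : ℝ, Measurable (fun y : ℝ => (ENNReal.ofReal (y ^ α)) ^ (-s)) := by
    intro α; fun_prop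
  have hwy := ws_wy (fun p => ‖v p‖ₑ) _ _ (hwm α₁) my hy
  have hwx := ws_wx (fun p => ‖v p‖ₑ) _ _ (hwm α₂) mx hx
  simp only [hvE] at hg hwy hwx
  have hh1 := ws_holder s hs (fun p => ‖u p‖ₑ) (fun p => ‖fderiv ℝ u p (1,0)‖ₑ)
    (fun p => ENNReal.ofReal (p.2 ^ α₁)) (by fun_prop) (by fun_prop) (by fun_prop)
    (fun p hp => by
      have := Real.rpow_pos_of_pos hp.2.1 α₁
      simpa using this) (fun p hp => ENNReal.ofReal_ne_top)
  have hh2 := ws_holder s hs (fun p => ‖u p‖ₑ) (fun p => ‖fderiv ℝ u p (0,1)‖ₑ)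
    (fun p => ENNReal.ofReal (p.1 ^ α₂)) (by fun_prop) (by fun_prop) (by fun_prop)
    (fun p hp => by
      have := Real.rpow_pos_of_pos hp.1.1 α₂
      simpa using this) (fun p hp => ENNReal.ofReal_ne_top)
  have alg := ws_algebra s hs _ _ _ 
    (∫⁻ p in Omega, (ENNReal.ofReal (p.2 ^ α₁) * ‖fderiv ℝ u p (1,0)‖ₑ)^(2:ℝ))
    (∫⁻ p in Omega, (ENNReal.ofReal (p.1 ^ α₂) * ‖fderiv ℝ u p (0,1)‖ₑ)^(2:ℝ))
    (∫⁻ y in Ioo (0:ℝ) 1, (ENNReal.ofReal (y ^ α₁)) ^ (-s))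
    (∫⁻ y in Ioo (0:ℝ) 1, (ENNReal.ofReal (y ^ α₂)) ^ (-s)) (ENNReal.ofReal s)
    (hfin (1,0)) (hfin (0,1)) hg ?_ ?_
  · have e1 : ∀ p, ‖u p‖ₑ ^ (2*s) = ‖u p‖ₑ ^ s * ‖u p‖ₑ ^ s := by
      intro p
      rw [← ENNReal.rpow_add_of_nonneg _ _ hs0.le hs0.le, two_mul]
    simp_rw [e1]
    refine alg.trans (le_of_eq ?_)
    congr 1
    rw [← lintegral_add_left (by fun_prop)]
    apply setLIntegral_congr_fun hΩ
    intro p hp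
    simp only
    rw [ENNReal.ofReal_add (by positivity) (by positivity)]
    have aux : ∀ r d : ℝ, 0 ≤ r → (ENNReal.ofReal r * ‖d‖ₑ) ^ (2:ℝ) = ENNReal.ofReal ((r*d)^2) := by
      intro r d hr
      rw [Real.enorm_eq_ofReal_abs, ← ENNReal.ofReal_mul hr,
        ENNReal.ofReal_rpow_of_nonneg (by positivity) (by norm_num)]
      congr 1
      rw [Real.rpow_two, mul_pow, mul_pow, sq_abs]
    rw [aux _ _ (Real.rpow_nonneg hp.2.1.le _), aux _ _ (Real.rpow_nonneg hp.1.1.le _)]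
    rfl
  · conv_lhs => rw [hfull]
    refine mul_le_mul' le_rfl (hh1.trans ?_)
    gcongr
  · conv_lhs => rw [hfull]
    refine mul_le_mul' le_rfl (hh2.trans ?_)
    gcongr

theorem weighted_sobolev_inequality (α₁ α₂ δ : ℝ)
    (hα₁ : α₁ ∈ Ioo (0:ℝ) (1/2)) (hα₂ : α₂ ∈ Ioo (0:ℝ) (1/2))
    (hδ₁ : 1/2 ≤ δ) (hδ₂ : δ < min (1/(α₁+1)) (1/(α₂+1))) :
    ∃ C : ℝ, 0 < C ∧ ∀ u : ℝ × ℝ → ℝ, IsTest u →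
      (∫ p in Omega, |u p| ^ (2*δ/(1-δ))) ^ ((1-δ)/(2*δ)) ≤
        C * Real.sqrt (∫ p in Omega,
          ((p.2 ^ α₁ * pdx u p) ^ 2 + (p.1 ^ α₂ * pdy u p) ^ 2)) := by
  obtain ⟨ha1, ha1'⟩ := hα₁
  obtain ⟨ha2, ha2'⟩ := hα₂
  obtain ⟨hd1, hd2⟩ := lt_min_iff.1 hδ₂
  rw [lt_div_iff₀ (by linarith)] at hd1 hd2
  have hδ0 : 0 < δ := by linarith
  have hδ1 : 0 < 1 - δ := by nlinarith
  set s : ℝ := max 2 (δ/(1-δ)) with hs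
  have hs2 : 2 ≤ s := le_max_left _ _
  have hs0 : 0 < s := by linarith
  have hsα : ∀ α : ℝ, 0 < α → α < 1/2 → δ * (α + 1) < 1 → α * s < 1 := by
    intro α h0 h1 h2
    rw [hs, mul_max_of_nonneg _ _ h0.le]
    apply max_lt (by linarith)
    rw [← mul_div_assoc, div_lt_one hδ1]
    linarith
  have hc1 := ws_const α₁ s (hsα _ ha1 ha1' hd1)
  have hc2 := ws_const α₂ s (hsα _ ha2 ha2' hd2)
  set K : ENNReal := ENNReal.ofReal s * ENNReal.ofReal s *
        ((∫⁻ y in Ioo (0:ℝ) 1, (ENNReal.ofReal (y ^ α₁)) ^ (-s)) *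
         (∫⁻ y in Ioo (0:ℝ) 1, (ENNReal.ofReal (y ^ α₂)) ^ (-s))) ^ (1/s) with hK
  have hKt : K ≠ ⊤ := by
    apply ENNReal.mul_ne_top (ENNReal.mul_ne_top ENNReal.ofReal_ne_top ENNReal.ofReal_ne_top)
    exact ENNReal.rpow_ne_top_of_nonneg (by positivity) (ENNReal.mul_ne_top hc1 hc2)
  refine ⟨Real.sqrt K.toReal + 1, by positivity, ?_⟩
  intro u hu
  have hmain := ws_main α₁ α₂ s hs2 ha1 ha2 u hu
  rw [← hK] at hmain
  obtain ⟨hsm, hcs, hsub⟩ := hu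
  have hΩ : MeasurableSet Omega := measurableSet_Ioo.prod measurableSet_Ioo
  have hvol : volume Omega = 1 := by
    rw [Omega, Measure.volume_eq_prod, Measure.prod_prod]; simp
  have hprob : IsProbabilityMeasure (volume.restrict Omega) := ⟨by simp [hvol]⟩
  have hu1 : ContDiff ℝ 1 u := hsm.of_le (by exact_mod_cast le_top)
  have hfc : Continuous (fderiv ℝ u) := hu1.continuous_fderiv one_ne_zero
  have hint : Integrable (fun p : ℝ × ℝ =>
      (p.2 ^ α₁ * pdx u p) ^ 2 + (p.1 ^ α₂ * pdy u p) ^ 2) (volume.restrict Omega) := by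
    apply Integrable.restrict
    apply Continuous.integrable_of_hasCompactSupport
    · unfold pdx pdy
      have h1 : Continuous (fun p : ℝ × ℝ => p.2 ^ α₁) :=
        continuous_snd.rpow_const (fun _ => Or.inr ha1.le)
      have h2 : Continuous (fun p : ℝ × ℝ => p.1 ^ α₂) :=
        continuous_fst.rpow_const (fun _ => Or.inr ha2.le)
      fun_prop
    · have h := hcs.fderiv (𝕜 := ℝ)
      apply h.mono
      intro p hp
      rw [Function.mem_support] at hp ⊢
      contrapose! hp
      simp [pdx, pdy, hp]
  set R := ∫ p in Omega, ((p.2 ^ α₁ * pdx u p) ^ 2 + (p.1 ^ α₂ * pdy u p) ^ 2) with hR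
  have hR0 : 0 ≤ R := integral_nonneg fun p => by positivity
  rw [← ofReal_integral_eq_lintegral_ofReal hint (ae_of_all _ fun p => by positivity), ← hR] at hmain
  -- exponents
  set q : ℝ := 2*δ/(1-δ) with hq
  have hq0 : 0 < q := by positivity
  have hqs : q ≤ 2 * s := by
    have : δ/(1-δ) ≤ s := le_max_right _ _
    rw [hq, mul_div_assoc]; linarith
  have hqinv : (1-δ)/(2*δ) = q⁻¹ := by rw [hq, inv_div]
  have hmem : ∀ r : ENNReal, MemLp u r (volume.restrict Omega) := fun r =>
    (hu1.continuous.memLp_of_hasCompactSupport hcs).restrict _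
  have hL := (hmem (ENNReal.ofReal q)).eLpNorm_eq_integral_rpow_norm
    (by simpa using hq0) ENNReal.ofReal_ne_top
  rw [ENNReal.toReal_ofReal hq0.le] at hL
  have hmono := eLpNorm_le_eLpNorm_of_exponent_le (μ := volume.restrict Omega) (f := u)
    (ENNReal.ofReal_le_ofReal hqs) hu1.continuous.aestronglyMeasurable
  rw [hL, eLpNorm_eq_lintegral_rpow_enorm_toReal (by simpa using hs0) ENNReal.ofReal_ne_top,
    ENNReal.toReal_ofReal (by linarith)] at hmono
  have hfinal : ENNReal.ofReal ((∫ p in Omega, ‖u p‖ ^ q) ^ q⁻¹) ≤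
      ENNReal.ofReal (Real.sqrt K.toReal * Real.sqrt R) := by
    refine hmono.trans ?_
    have e : (1/(2*s)) = 1/s * (1/2) := by field_simp
    rw [e, ENNReal.rpow_mul]
    refine (ENNReal.rpow_le_rpow hmain (by norm_num)).trans (le_of_eq ?_)
    conv_lhs => rw [← ENNReal.ofReal_toReal hKt]
    rw [← ENNReal.ofReal_mul ENNReal.toReal_nonneg,
      ENNReal.ofReal_rpow_of_nonneg (by positivity) (by norm_num), ← Real.sqrt_eq_rpow,
      Real.sqrt_mul ENNReal.toReal_nonneg]
  rw [ENNReal.ofReal_le_ofReal_iff (by positivity)] at hfinal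
  rw [hqinv]
  refine (le_trans hfinal ?_)
  have := Real.sqrt_nonneg R
  nlinarith
end
end

section
/- (Poincaré inequality for the degenerate weights) There exists a constant C > 0 such that for every u ∈ C_c^∞(Ω), ∫_Ω u² dxdy ≤ C ∫_Ω |y^{α₁}∂ₓu|² + |x^{α₂}∂_yu|² dxdy. -/
open MeasureTheory Set Filter

noncomputable section

lemma oneD (g g' : ℝ → ℝ) (hg : ∀ x, HasDerivAt g (g' x) x) (hc : Continuous g')
    (h0 : g 0 = 0) (x : ℝ) (hx : x ∈ Ioo (0:ℝ) 1) :
    g x ^ 2 ≤ x * ∫ s in Ioo (0:ℝ) 1, g' s ^ 2 := by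
  obtain ⟨hx0, hx1⟩ := hx
  have h1 : ∫ s in (0:ℝ)..x, g' s = g x := by
    rw [intervalIntegral.integral_eq_sub_of_hasDerivAt (fun y _ => hg y)
      (hc.intervalIntegrable _ _), h0, sub_zero]
  set c := g x / x with hcdef
  have h2 : 0 ≤ ∫ s in (0:ℝ)..x, (g' s - c) ^ 2 :=
    intervalIntegral.integral_nonneg hx0.le (fun _ _ => sq_nonneg _)
  have h3 : ∫ s in (0:ℝ)..x, (g' s - c) ^ 2
      = (∫ s in (0:ℝ)..x, g' s ^ 2) - 2 * c * g x + x * c ^ 2 := by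
    have e : (fun s => (g' s - c) ^ 2) = fun s => (g' s ^ 2 - 2 * c * g' s) + c ^ 2 := by
      funext s; ring
    rw [e, intervalIntegral.integral_add, intervalIntegral.integral_sub,
      intervalIntegral.integral_const_mul, h1, intervalIntegral.integral_const]
    · simp
    all_goals exact Continuous.intervalIntegrable (by fun_prop) _ _
  have h4 : (∫ s in (0:ℝ)..x, g' s ^ 2) ≤ ∫ s in Ioo (0:ℝ) 1, g' s ^ 2 := by
    rw [← integral_Ioc_eq_integral_Ioo, ← intervalIntegral.integral_of_le zero_le_one]
    apply intervalIntegral.integral_mono_interval le_rfl hx0.le hx1.le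
    · exact Eventually.of_forall (fun _ => sq_nonneg _)
    · exact Continuous.intervalIntegrable (by fun_prop) _ _
  have hgx : g x = c * x := by rw [hcdef]; field_simp
  rw [h3, hgx] at h2
  rw [hgx]
  have : x * c ^ 2 ≤ ∫ s in Ioo (0:ℝ) 1, g' s ^ 2 := by nlinarith
  nlinarith

lemma wt (a y : ℝ) (ha : a ∈ Ioo (0:ℝ) (1/2)) (hy : y ∈ Ioo (0:ℝ) 1) : y ≤ (y ^ a) ^ 2 := by
  rw [← Real.rpow_natCast, ← Real.rpow_mul hy.1.le]
  calc y = y ^ (1:ℝ) := (Real.rpow_one y).symm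
    _ ≤ _ := Real.rpow_le_rpow_of_exponent_ge hy.1 hy.2.le (by
      have := ha.2; push_cast; linarith)

lemma wtd (g g' : ℝ → ℝ) (hg : ∀ x, HasDerivAt g (g' x) x) (hc : Continuous g')
    (h0 : g 0 = 0) (a x y : ℝ) (ha : a ∈ Ioo (0:ℝ) (1/2)) (hx : x ∈ Ioo (0:ℝ) 1)
    (hy : y ∈ Ioo (0:ℝ) 1) (hxy : x ≤ y) :
    g x ^ 2 ≤ ∫ s in Ioo (0:ℝ) 1, (y ^ a * g' s) ^ 2 := by
  simp_rw [mul_pow]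
  rw [integral_const_mul]
  refine (oneD g g' hg hc h0 x hx).trans ?_
  exact mul_le_mul_of_nonneg_right (hxy.trans (wt a y ha hy))
    (integral_nonneg (fun _ => sq_nonneg _))

/-- Poincaré inequality for the degenerate weights: there is `C > 0`
such that `∫_Ω u² ≤ C ∫_Ω |y^{α₁}∂ₓu|² + |x^{α₂}∂_yu|²` for every `u ∈ C_c^∞(Ω)`. -/
theorem degenerate_poincare (α₁ α₂ : ℝ)
    (hα₁ : α₁ ∈ Ioo (0:ℝ) (1/2)) (hα₂ : α₂ ∈ Ioo (0:ℝ) (1/2)) :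
    ∃ C : ℝ, 0 < C ∧ ∀ u : ℝ × ℝ → ℝ, IsTest u →
      (∫ p in Omega, (u p) ^ 2) ≤
        C * ∫ p in Omega, ((p.2 ^ α₁ * pdx u p) ^ 2 + (p.1 ^ α₂ * pdy u p) ^ 2) := by
  refine ⟨1, one_pos, fun u hu => ?_⟩
  obtain ⟨hsm, hcs, hsup⟩ := hu
  have hd : Differentiable ℝ u := hsm.differentiable (by simp)
  have hcf : Continuous (fderiv ℝ u) := hsm.continuous_fderiv (by simp)
  have hcx : Continuous (pdx u) := by unfold pdx; fun_prop
  have hcy : Continuous (pdy u) := by unfold pdy; fun_prop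
  have hsx : HasCompactSupport (pdx u) := hcs.fderiv_apply (𝕜 := ℝ) (1, 0)
  have hsy : HasCompactSupport (pdy u) := hcs.fderiv_apply (𝕜 := ℝ) (0, 1)
  have hdx : ∀ y x, HasDerivAt (fun s => u (s, y)) (pdx u (x, y)) x := fun y x =>
    (hd (x, y)).hasFDerivAt.comp_hasDerivAt x ((hasDerivAt_id x).prodMk (hasDerivAt_const x y))
  have hdy : ∀ x y, HasDerivAt (fun t => u (x, t)) (pdy u (x, y)) y := fun x y =>
    (hd (x, y)).hasFDerivAt.comp_hasDerivAt y ((hasDerivAt_const y x).prodMk (hasDerivAt_id y))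
  have hz : ∀ p, p ∉ Omega → u p = 0 := fun p hp =>
    image_eq_zero_of_notMem_tsupport (fun h => hp (hsup h))
  set f : ℝ × ℝ → ℝ := fun p => (p.2 ^ α₁ * pdx u p) ^ 2 with hf
  set h : ℝ × ℝ → ℝ := fun p => (p.1 ^ α₂ * pdy u p) ^ 2 with hh
  have hr1 : Continuous (fun p : ℝ × ℝ => p.2 ^ α₁) :=
    (Real.continuous_rpow_const hα₁.1.le).comp continuous_snd
  have hr2 : Continuous (fun p : ℝ × ℝ => p.1 ^ α₂) :=
    (Real.continuous_rpow_const hα₂.1.le).comp continuous_fst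
  have hfi : Integrable f := by
    apply Continuous.integrable_of_hasCompactSupport ((hr1.mul hcx).pow 2)
    exact hsx.mono (fun p hp => by
      simp only [Function.mem_support] at hp ⊢
      intro h0; apply hp; simp [h0])
  have hhi : Integrable h := by
    apply Continuous.integrable_of_hasCompactSupport ((hr2.mul hcy).pow 2)
    exact hsy.mono (fun p hp => by
      simp only [Function.mem_support] at hp ⊢
      intro h0; apply hp; simp [h0])
  have hui : Integrable (fun p => u p ^ 2) := by
    apply Continuous.integrable_of_hasCompactSupport (hd.continuous.pow 2)
    exact hcs.mono (fun p hp => by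
      simp only [Function.mem_support] at hp ⊢
      intro h0; apply hp; simp [h0])
  set ν : Measure ℝ := volume.restrict (Ioo (0:ℝ) 1) with hν
  have hm : (volume.restrict Omega : Measure (ℝ × ℝ)) = ν.prod ν := by
    rw [hν, Measure.prod_restrict]; rfl
  haveI : IsProbabilityMeasure ν := ⟨by simp [hν]⟩
  have hfi' : Integrable f (ν.prod ν) := hm ▸ hfi.restrict
  have hhi' : Integrable h (ν.prod ν) := hm ▸ hhi.restrict
  have hui' : Integrable (fun p => u p ^ 2) (ν.prod ν) := hm ▸ hui.restrict
  have hF : Integrable (fun p : ℝ × ℝ => ∫ s, f (s, p.2) ∂ν) (ν.prod ν) :=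
    hfi'.integral_prod_right.comp_snd ν
  have hG : Integrable (fun p : ℝ × ℝ => ∫ t, h (p.1, t) ∂ν) (ν.prod ν) :=
    hhi'.integral_prod_left.comp_fst ν
  have key : (∫ p in Omega, u p ^ 2)
      ≤ ∫ p in Omega, ((∫ s, f (s, p.2) ∂ν) + ∫ t, h (p.1, t) ∂ν) := by
    apply setIntegral_mono_on hui.integrableOn
    · unfold IntegrableOn; rw [hm]; exact hF.add hG
    · exact measurableSet_Ioo.prod measurableSet_Ioo
    · rintro ⟨x, y⟩ ⟨hx, hy⟩
      have p1 : 0 ≤ ∫ s, f (s, y) ∂ν := integral_nonneg (fun _ => sq_nonneg _)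
      have p2 : 0 ≤ ∫ t, h (x, t) ∂ν := integral_nonneg (fun _ => sq_nonneg _)
      rcases le_total x y with hxy | hxy
      · have := wtd (fun s => u (s, y)) (fun s => pdx u (s, y)) (hdx y) (by fun_prop)
          (hz _ (fun hp => lt_irrefl _ hp.1.1)) α₁ x y hα₁ hx hy hxy
        exact this.trans (le_add_of_nonneg_right p2)
      · have := wtd (fun t => u (x, t)) (fun t => pdy u (x, t)) (hdy x) (by fun_prop)
          (hz _ (fun hp => lt_irrefl _ hp.2.1)) α₂ y x hα₂ hy hx hxy
        exact this.trans (le_add_of_nonneg_left p1)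
  refine key.trans (le_of_eq ?_)
  rw [one_mul, hm, integral_add hF hG, integral_add hfi' hhi', integral_prod_symm f hfi',
    integral_prod h hhi',
    integral_fun_snd (fun y => ∫ s, f (s, y) ∂ν), integral_fun_fst (fun x => ∫ t, h (x, t) ∂ν)]
  simp
end
end

section
/- (Compact embedding) Let m ∈ [1,4). Every sequence (uₙ) of functions in C_c^∞(Ω) that is bounded in the 𝓗¹-norm (i.e. sup_n ‖uₙ‖_{𝓗¹} < ∞) possesses a subsequence that converges in L^m(Ω); equivalently, the space 𝓗₀¹(Ω) is compactly embedded in L^m(Ω) for every m ∈ [1,4). -/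
open MeasureTheory Set Filter

noncomputable section

/-- Iterated integral over a rectangle. -/
def II (F : ℝ × ℝ → ℝ) (a b c d : ℝ) : ℝ := ∫ x in a..b, ∫ y in c..d, F (x, y)

lemma cI {F : ℝ × ℝ → ℝ} (hF : Continuous F) (c d : ℝ) :
    Continuous fun x => ∫ y in c..d, F (x, y) :=
  intervalIntegral.continuous_parametric_intervalIntegral_of_continuous'
    (f := fun x y => F (x, y)) (by simpa [Function.uncurry_def] using hF) c d

lemma II_mono {F G : ℝ × ℝ → ℝ} (hF : Continuous F) (hG : Continuous G) {a b c d : ℝ}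
    (hab : a ≤ b) (hcd : c ≤ d)
    (h : ∀ x ∈ Icc a b, ∀ y ∈ Icc c d, F (x, y) ≤ G (x, y)) : II F a b c d ≤ II G a b c d := by
  refine intervalIntegral.integral_mono_on hab ((cI hF c d).intervalIntegrable _ _)
    ((cI hG c d).intervalIntegrable _ _) fun x hx => ?_
  exact intervalIntegral.integral_mono_on hcd
    ((show Continuous fun y => F (x, y) by fun_prop).intervalIntegrable _ _)
    ((show Continuous fun y => G (x, y) by fun_prop).intervalIntegrable _ _) (h x hx)

lemma II_nonneg {F : ℝ × ℝ → ℝ} {a b c d : ℝ}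
    (hab : a ≤ b) (hcd : c ≤ d) (h : ∀ p, 0 ≤ F p) : 0 ≤ II F a b c d :=
  intervalIntegral.integral_nonneg hab fun x _ =>
    intervalIntegral.integral_nonneg hcd fun y _ => h _

lemma II_add {F G : ℝ × ℝ → ℝ} (hF : Continuous F) (hG : Continuous G) (a b c d : ℝ) :
    II (fun p => F p + G p) a b c d = II F a b c d + II G a b c d := by
  unfold II
  rw [← intervalIntegral.integral_add ((cI hF c d).intervalIntegrable _ _)
    ((cI hG c d).intervalIntegrable _ _)]
  congr 1; ext x
  exact intervalIntegral.integral_add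
    ((show Continuous fun y => F (x, y) by fun_prop).intervalIntegrable _ _)
    ((show Continuous fun y => G (x, y) by fun_prop).intervalIntegrable _ _)

lemma II_smul (k : ℝ) (F : ℝ × ℝ → ℝ) (a b c d : ℝ) :
    II (fun p => k * F p) a b c d = k * II F a b c d := by
  simp [II, intervalIntegral.integral_const_mul]

lemma II_sub {F G : ℝ × ℝ → ℝ} (hF : Continuous F) (hG : Continuous G) (a b c d : ℝ) :
    II (fun p => F p - G p) a b c d = II F a b c d - II G a b c d := by
  have := II_add hF (G := fun p => (-1) * G p) (by fun_prop) a b c d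
  rw [II_smul] at this
  rw [show (fun p => F p - G p) = fun p => F p + (-1) * G p by ext; ring, this]; ring

lemma II_swap {F : ℝ × ℝ → ℝ} (hF : Continuous F) (a b c d : ℝ) :
    II F a b c d = ∫ y in c..d, ∫ x in a..b, F (x, y) := by
  unfold II
  refine intervalIntegral_intervalIntegral_swap (F := fun x y => F (x, y)) ?_
  have : IntegrableOn F (uIcc a b ×ˢ uIcc c d) (volume.prod volume) :=
    hF.continuousOn.integrableOn_compact (isCompact_uIcc.prod isCompact_uIcc)
  exact (this.mono_set (prod_mono uIoc_subset_uIcc uIoc_subset_uIcc))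

lemma II_swap' {F : ℝ × ℝ → ℝ} (hF : Continuous F) (a b c d : ℝ) :
    II F a b c d = II (fun p => F p.swap) c d a b := II_swap hF a b c d

lemma II_mono_set {F : ℝ × ℝ → ℝ} (hF : Continuous F) (h : ∀ p, 0 ≤ F p) {a b c d : ℝ}
    (h1 : 0 ≤ a) (hab : a ≤ b) (h2 : b ≤ 1) (h3 : 0 ≤ c) (hcd : c ≤ d) (h4 : d ≤ 1) :
    II F a b c d ≤ II F 0 1 0 1 := by
  have : II F a b c d ≤ II F a b 0 1 := by
    refine intervalIntegral.integral_mono_on hab ((cI hF c d).intervalIntegrable _ _)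
      ((cI hF 0 1).intervalIntegrable _ _) fun x hx => ?_
    exact intervalIntegral.integral_mono_interval h3 hcd h4 (Eventually.of_forall fun y => h _)
      ((show Continuous fun y => F (x, y) by fun_prop).intervalIntegrable _ _)
  refine this.trans ?_
  exact intervalIntegral.integral_mono_interval h1 hab h2
    (Eventually.of_forall fun y => intervalIntegral.integral_nonneg zero_le_one fun _ _ => h _)
    ((cI hF 0 1).intervalIntegrable _ _)

lemma II_abs {F : ℝ × ℝ → ℝ} (hF : Continuous F) {a b c d : ℝ}
    (hab : a ≤ b) (hcd : c ≤ d) : |II F a b c d| ≤ II (fun p => |F p|) a b c d := by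
  refine (intervalIntegral.abs_integral_le_integral_abs hab).trans ?_
  refine intervalIntegral.integral_mono_on hab ((cI hF c d).abs.intervalIntegrable _ _)
      ((cI hF.abs c d).intervalIntegrable _ _) fun x hx => ?_
  exact intervalIntegral.abs_integral_le_integral_abs hcd

lemma omega_integrable {F : ℝ × ℝ → ℝ} (hF : Continuous F) : IntegrableOn F Omega := by
  have : IntegrableOn F (Icc (0:ℝ) 1 ×ˢ Icc (0:ℝ) 1) :=
    hF.continuousOn.integrableOn_compact (isCompact_Icc.prod isCompact_Icc)
  exact this.mono_set (prod_mono Ioo_subset_Icc_self Ioo_subset_Icc_self)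

lemma omega_int {F : ℝ × ℝ → ℝ} (hF : Continuous F) : ∫ p in Omega, F p = II F 0 1 0 1 := by
  have h := omega_integrable hF
  unfold Omega at *
  rw [Measure.volume_eq_prod] at *
  rw [setIntegral_prod F h]
  simp only [II, intervalIntegral.integral_of_le zero_le_one, integral_Ioc_eq_integral_Ioo]

lemma poinc1 {f : ℝ → ℝ} (hf : Continuous f) {a b K : ℝ} (hab : a < b)
    (h : ∀ s ∈ Icc a b, ∀ t ∈ Icc a b, |f s - f t| ≤ K) :
    ∫ x in a..b, |f x| ≤ |∫ x in a..b, f x| + (b - a) * K := by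
  have hba : 0 < b - a := by linarith
  have key : ∀ s ∈ Icc a b, |f s| ≤ (b - a)⁻¹ * (|∫ x in a..b, f x| + (b - a) * K) := by
    intro s hs
    have e : (b - a) * f s = (∫ x in a..b, f x) + ∫ x in a..b, (f s - f x) := by
      rw [intervalIntegral.integral_sub (by simp) (hf.intervalIntegrable _ _)]
      simp
    have e2 : |∫ x in a..b, (f s - f x)| ≤ (b - a) * K := by
      refine (intervalIntegral.abs_integral_le_integral_abs hab.le).trans ?_
      have := intervalIntegral.integral_mono_on (μ := volume) (f := fun x => |f s - f x|)
        (g := fun _ => K) hab.le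
        ((show Continuous fun x => |f s - f x| by fun_prop).intervalIntegrable _ _) (by simp)
        (fun x hx => h s hs x hx)
      simpa using this
    rw [le_inv_mul_iff₀ hba]
    have e3 : (b - a) * |f s| = |(b - a) * f s| := by rw [abs_mul, abs_of_pos hba]
    rw [e3, e]
    exact (abs_add_le _ _).trans (by linarith)
  have := intervalIntegral.integral_mono_on (μ := volume) (f := fun x => |f x|)
        (g := fun _ => (b - a)⁻¹ * (|∫ x in a..b, f x| + (b - a) * K)) hab.le
        (hf.abs.intervalIntegrable _ _) (by simp) key
  rw [intervalIntegral.integral_const, smul_eq_mul, ← mul_assoc, mul_inv_cancel₀ hba.ne',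
    one_mul] at this
  exact this

lemma ftc_le {f f' : ℝ → ℝ} (hf : ∀ x, HasDerivAt f (f' x) x) (hf' : Continuous f') {a b : ℝ}
    (s : ℝ) (hs : s ∈ Icc a b) (t : ℝ) (ht : t ∈ Icc a b) :
    |f s - f t| ≤ ∫ x in a..b, |f' x| := by
  wlog hst : t ≤ s generalizing s t
  · rw [abs_sub_comm]; exact this t ht s hs (le_of_not_ge hst)
  rw [← intervalIntegral.integral_eq_sub_of_hasDerivAt (fun x _ => hf x)
    (hf'.intervalIntegrable _ _)]
  refine (intervalIntegral.abs_integral_le_integral_abs hst).trans ?_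
  exact intervalIntegral.integral_mono_interval ht.1 hst hs.2
    (Eventually.of_forall fun y => abs_nonneg _) (hf'.abs.intervalIntegrable _ _)

lemma cell {w wx wy : ℝ × ℝ → ℝ} (hw : Continuous w) (hwx : Continuous wx) (hwy : Continuous wy)
    (dx : ∀ x y, HasDerivAt (fun s => w (s, y)) (wx (x, y)) x)
    (dy : ∀ x y, HasDerivAt (fun s => w (x, s)) (wy (x, y)) y) {a b c d : ℝ}
    (hab : a < b) (hcd : c < d) :
    II (fun p => |w p|) a b c d ≤ |II w a b c d| + (b - a) * II (fun p => |wx p|) a b c d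
      + (d - c) * II (fun p => |wy p|) a b c d := by
  have h1 : II (fun p => |w p|) a b c d ≤
      ∫ x in a..b, (|∫ y in c..d, w (x, y)| + (d - c) * ∫ y in c..d, |wy (x, y)|) := by
    refine intervalIntegral.integral_mono_on hab.le ((cI hw.abs c d).intervalIntegrable _ _)
      (Continuous.intervalIntegrable ((cI hw c d).abs.add
        (continuous_const.mul (cI hwy.abs c d))) _ _) fun x hx => ?_
    exact poinc1 (f := fun y => w (x, y)) (by fun_prop) hcd
      (ftc_le (dy x) (by fun_prop))
  rw [intervalIntegral.integral_add ((cI hw c d).abs.intervalIntegrable _ _)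
    (((cI hwy.abs c d).intervalIntegrable _ _).const_mul _),
    intervalIntegral.integral_const_mul] at h1
  have h2 := poinc1 (cI hw c d) hab (K := II (fun p => |wx p|) a b c d) (by
    intro s hs t ht
    rw [← intervalIntegral.integral_sub
      ((show Continuous fun y => w (s, y) by fun_prop).intervalIntegrable _ _)
      ((show Continuous fun y => w (t, y) by fun_prop).intervalIntegrable _ _)]
    refine (intervalIntegral.abs_integral_le_integral_abs hcd.le).trans ?_
    rw [II_swap hwx.abs]
    refine intervalIntegral.integral_mono_on hcd.le
      ((show Continuous fun y => |w (s, y) - w (t, y)| by fun_prop).intervalIntegrable _ _)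
      ((cI (F := fun p => |wx p.swap|) (by fun_prop) a b).intervalIntegrable _ _) fun y hy => ?_
    exact ftc_le (f := fun s => w (s, y)) (fun x => dx x y) (by fun_prop) s hs t ht)
  unfold II at *
  linarith

lemma II_grid {F : ℝ × ℝ → ℝ} (hF : Continuous F) (N : ℕ) (hN : 0 < N) :
    II F 0 1 0 1 = ∑ i ∈ Finset.range N, ∑ j ∈ Finset.range N,
      II F (i / N) ((i + 1) / N) (j / N) ((j + 1) / N) := by
  have hN' : (N : ℝ) ≠ 0 := by positivity
  have key : ∀ f : ℝ → ℝ, Continuous f → ∫ x in (0:ℝ)..1, f x =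
      ∑ i ∈ Finset.range N, ∫ x in ((i:ℝ) / N)..((i + 1) / N), f x := by
    intro f hf
    have := intervalIntegral.sum_integral_adjacent_intervals (μ := volume) (f := f)
      (a := fun i : ℕ => (i : ℝ) / N) (n := N) (fun k _ => hf.intervalIntegrable _ _)
    simp only [Nat.cast_add, Nat.cast_one, Nat.cast_zero, zero_div, div_self hN'] at this
    exact this.symm
  unfold II
  rw [key _ (cI hF 0 1)]
  refine Finset.sum_congr rfl fun i _ => ?_
  rw [← intervalIntegral.integral_finsetSum
    (fun j _ => (cI hF _ _).intervalIntegrable _ _)]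
  congr 1; ext x
  exact key _ (by fun_prop)

lemma grid_ineq {w wx wy : ℝ × ℝ → ℝ} (hw : Continuous w) (hwx : Continuous wx)
    (hwy : Continuous wy)
    (dx : ∀ x y, HasDerivAt (fun s => w (s, y)) (wx (x, y)) x)
    (dy : ∀ x y, HasDerivAt (fun s => w (x, s)) (wy (x, y)) y) (N : ℕ) (hN : 0 < N) :
    II (fun p => |w p|) 0 1 0 1 ≤ (∑ i ∈ Finset.range N, ∑ j ∈ Finset.range N,
      |II w (i / N) ((i + 1) / N) (j / N) ((j + 1) / N)|) +
      (1 / N : ℝ) * (II (fun p => |wx p|) 0 1 0 1 + II (fun p => |wy p|) 0 1 0 1) := by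
  rw [II_grid hw.abs N hN, II_grid hwx.abs N hN, II_grid hwy.abs N hN]
  simp only [← Finset.sum_add_distrib, Finset.mul_sum]
  refine Finset.sum_le_sum fun i _ => Finset.sum_le_sum fun j _ => ?_
  have hN' : (0 : ℝ) < N := by positivity
  have := cell hw hwx hwy dx dy (a := i / N) (b := (i + 1) / N) (c := j / N) (d := (j + 1) / N)
    (by gcongr; linarith) (by gcongr; linarith)
  have e : ∀ i : ℕ, ((i : ℝ) + 1) / N - i / N = 1 / N := fun i => by ring
  rw [e, e] at this
  linarith

lemma wlem {α t : ℝ} (hα : α ∈ Ioo (0:ℝ) (1/2)) (ht : 0 < t) {a b : ℝ × ℝ → ℝ} {G : ℝ → ℝ}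
    (ha : Continuous a) (hb : Continuous b) (hG : Continuous G)
    (h : ∀ x ∈ Icc (0:ℝ) 1, ∀ y ∈ Icc (0:ℝ) 1, a (x, y) ^ 2 ≤ G x) :
    II (fun p => a p * b p) 0 1 0 1 ≤ t / 2 / (1 - 2 * α) * (∫ x in (0:ℝ)..1, G x)
      + 1 / (2 * t) * II (fun p => (p.2 ^ α * b p) ^ 2) 0 1 0 1 := by
  have hc : Continuous fun p : ℝ × ℝ => (p.2 ^ α * b p) ^ 2 :=
    (((Real.continuous_rpow_const hα.1.le).comp continuous_snd).mul hb).pow 2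
  have hr : -1 < -2 * α := by linarith [hα.2]
  rw [← II_smul]
  unfold II
  rw [← intervalIntegral.integral_const_mul, ← intervalIntegral.integral_add
    ((hG.const_mul _).intervalIntegrable _ _)
    ((cI (F := fun p => 1 / (2 * t) * (p.2 ^ α * b p) ^ 2) (by fun_prop) 0 1).intervalIntegrable _ _)]
  refine intervalIntegral.integral_mono_on zero_le_one
    ((cI (F := fun p => a p * b p) (by fun_prop) 0 1).intervalIntegrable _ _)
    (Continuous.intervalIntegrable ((hG.const_mul _).add
      (cI (F := fun p => 1 / (2 * t) * (p.2 ^ α * b p) ^ 2) (by fun_prop) 0 1)) _ _)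
    fun x hx => ?_
  have i1 : IntervalIntegrable (fun y : ℝ => t / 2 * G x * y ^ (-2 * α)) volume 0 1 :=
    (intervalIntegral.intervalIntegrable_rpow' hr).const_mul _
  have i2 : IntervalIntegrable (fun y : ℝ => 1 / (2 * t) * (y ^ α * b (x, y)) ^ 2) volume 0 1 :=
    (show Continuous fun y : ℝ => 1 / (2 * t) * (y ^ α * b (x, y)) ^ 2 from
      continuous_const.mul (hc.comp (by fun_prop : Continuous fun y : ℝ => (x, y)))).intervalIntegrable _ _
  have e : t / 2 / (1 - 2 * α) * G x = ∫ y in (0:ℝ)..1, t / 2 * G x * y ^ (-2 * α) := by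
    rw [intervalIntegral.integral_const_mul, integral_rpow (Or.inl hr)]
    have : -2 * α + 1 ≠ 0 := by linarith
    have h2 : 1 - 2 * α ≠ 0 := by linarith
    rw [Real.one_rpow, Real.zero_rpow this]
    rw [show -2 * α + 1 = 1 - 2 * α by ring]; field_simp; ring
  rw [e, ← intervalIntegral.integral_add i1 i2]
  refine intervalIntegral.integral_mono_on_of_le_Ioo zero_le_one
    ((show Continuous fun y => a (x, y) * b (x, y) by fun_prop).intervalIntegrable _ _)
    (i1.add i2) fun y hy => ?_
  have hy0 : 0 < y := hy.1
  have hz : 0 < y ^ α := by positivity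
  have e1 : y ^ (-2 * α) = ((y ^ α)⁻¹) ^ 2 := by
    rw [← Real.rpow_neg hy0.le, ← Real.rpow_natCast, ← Real.rpow_mul hy0.le]; congr 1; push_cast; ring
  rw [e1]
  set z := y ^ α
  have hGx := h x hx y ⟨hy.1.le, hy.2.le⟩
  have h3 : t / 2 * a (x, y) ^ 2 * z⁻¹ ^ 2 ≤ t / 2 * G x * z⁻¹ ^ 2 := by gcongr
  refine le_trans ?_ (add_le_add_left h3 _)
  have h4 : t / 2 * a (x, y) ^ 2 * z⁻¹ ^ 2 + 1 / (2 * t) * (z * b (x, y)) ^ 2 - a (x, y) * b (x, y)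
      = 1 / (2 * t) * (t * a (x, y) * z⁻¹ - z * b (x, y)) ^ 2 := by
    field_simp; ring
  have : 0 ≤ 1 / (2 * t) * (t * a (x, y) * z⁻¹ - z * b (x, y)) ^ 2 := by positivity
  linarith

lemma test_facts {u : ℝ × ℝ → ℝ} (hu : IsTest u) :
    Continuous u ∧ Continuous (pdx u) ∧ Continuous (pdy u) ∧
    (∀ x y, HasDerivAt (fun s => u (s, y)) (pdx u (x, y)) x) ∧
    (∀ x y, HasDerivAt (fun s => u (x, s)) (pdy u (x, y)) y) ∧
    (∀ x, u (x, 0) = 0) ∧ (∀ y, u (0, y) = 0) := by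
  obtain ⟨h1, h2, h3⟩ := hu
  have hd : Differentiable ℝ u := h1.differentiable (by simp)
  have hc : Continuous (fderiv ℝ u) := h1.continuous_fderiv (by simp)
  have hz : ∀ p, p ∉ Omega → u p = 0 := fun p hp =>
    image_eq_zero_of_notMem_tsupport fun h => hp (h3 h)
  refine ⟨h1.continuous, hc.clm_apply continuous_const, hc.clm_apply continuous_const, ?_, ?_,
    fun x => hz _ ?_, fun y => hz _ ?_⟩
  · intro x y
    exact (hd (x, y)).hasFDerivAt.comp_hasDerivAt x
      ((hasDerivAt_id x).prodMk (hasDerivAt_const x y))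
  · intro x y
    exact (hd (x, y)).hasFDerivAt.comp_hasDerivAt y
      ((hasDerivAt_const y x).prodMk (hasDerivAt_id y))
  · simp [Omega]
  · simp [Omega]

lemma bounds {α₁ α₂ B : ℝ} (hα₁ : α₁ ∈ Ioo (0:ℝ) (1/2)) (hα₂ : α₂ ∈ Ioo (0:ℝ) (1/2)) :
    ∃ C : ℝ, ∀ u, IsTest u → H1Norm α₁ α₂ u (pdx u) (pdy u) ≤ B →
      II (fun p => |pdx u p|) 0 1 0 1 ≤ C ∧ II (fun p => |pdy u p|) 0 1 0 1 ≤ C ∧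
      II (fun p => |u p|) 0 1 0 1 ≤ C ∧ II (fun p => u p ^ 4) 0 1 0 1 ≤ C := by
  have p1 : 0 < 1 - 2 * α₁ := by linarith [hα₁.2]
  have p2 : 0 < 1 - 2 * α₂ := by linarith [hα₂.2]
  set E := B ^ 2 / (1 - 2 * α₁) + B ^ 2 / (1 - 2 * α₂) with hE
  set C1 := 1 / 2 / (1 - 2 * α₁) + B ^ 2 / 2 with hC1
  set C2 := 1 / 2 / (1 - 2 * α₂) + B ^ 2 / 2 with hC2
  have q1 : 0 ≤ B ^ 2 / (1 - 2 * α₁) := by positivity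
  have q2 : 0 ≤ B ^ 2 / (1 - 2 * α₂) := by positivity
  have r1 : 0 ≤ C1 := by positivity
  have r2 : 0 ≤ C2 := by positivity
  refine ⟨C1 + C2 + (1 + 4 * (2 * E * (2 * E))), fun u hu hB => ?_⟩
  obtain ⟨cu, cx, cy, dx, dy, zx, zy⟩ := test_facts hu
  have w1 : Continuous fun p : ℝ × ℝ => (p.2 ^ α₁ * pdx u p) ^ 2 :=
    (((Real.continuous_rpow_const hα₁.1.le).comp continuous_snd).mul cx).pow 2
  have w2 : Continuous fun p : ℝ × ℝ => (p.1 ^ α₂ * pdy u p) ^ 2 :=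
    (((Real.continuous_rpow_const hα₂.1.le).comp continuous_fst).mul cy).pow 2
  have hB2 := (Real.sqrt_le_iff.1 hB).2
  rw [omega_int (F := fun p => u p ^ 2) (by fun_prop), omega_int w1, omega_int w2] at hB2
  have n0 : 0 ≤ II (fun p => u p ^ 2) 0 1 0 1 :=
    II_nonneg zero_le_one zero_le_one fun p => sq_nonneg _
  have n1 : 0 ≤ II (fun p : ℝ × ℝ => (p.2 ^ α₁ * pdx u p) ^ 2) 0 1 0 1 :=
    II_nonneg zero_le_one zero_le_one fun p => sq_nonneg _
  have n2 : 0 ≤ II (fun p : ℝ × ℝ => (p.1 ^ α₂ * pdy u p) ^ 2) 0 1 0 1 :=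
    II_nonneg zero_le_one zero_le_one fun p => sq_nonneg _
  have D1 : II (fun p : ℝ × ℝ => (p.2 ^ α₁ * |pdx u p|) ^ 2) 0 1 0 1 ≤ B ^ 2 := by
    simp only [mul_pow, sq_abs] at *; linarith
  have D2 : II (fun p : ℝ × ℝ => (p.2 ^ α₂ * |pdy u p.swap|) ^ 2) 0 1 0 1 ≤ B ^ 2 := by
    rw [II_swap' w2] at *
    simp only [mul_pow, sq_abs, Prod.fst_swap] at *; linarith
  -- sup bounds
  set G : ℝ → ℝ := fun x => ∫ y in (0:ℝ)..1, |2 * (u (x, y) * pdy u (x, y))| with hG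
  set F : ℝ → ℝ := fun y => ∫ x in (0:ℝ)..1, |2 * (u (x, y) * pdx u (x, y))| with hF
  have cG : Continuous G := cI (F := fun p => |2 * (u p * pdy u p)|) (by fun_prop) 0 1
  have cF : Continuous F := cI (F := fun p => |2 * (u p.swap * pdx u p.swap)|) (by fun_prop) 0 1
  have sG : ∀ x ∈ Icc (0:ℝ) 1, ∀ y ∈ Icc (0:ℝ) 1, |u (x, y)| ^ 2 ≤ G x := by
    intro x _ y hy
    have := ftc_le (f := fun s => u (x, s) ^ 2) (f' := fun s => 2 * (u (x, s) * pdy u (x, s)))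
      (fun s => by have := (dy x s).pow 2; simp [mul_assoc] at this; exact this)
      (by fun_prop) y hy 0 (by simp)
    rw [sq_abs]
    simpa only [zx, ne_eq, OfNat.ofNat_ne_zero, not_false_eq_true, zero_pow, sub_zero, abs_pow, sq_abs] using this
  have sF : ∀ y ∈ Icc (0:ℝ) 1, ∀ x ∈ Icc (0:ℝ) 1, |u (x, y)| ^ 2 ≤ F y := by
    intro y _ x hx
    have := ftc_le (f := fun s => u (s, y) ^ 2) (f' := fun s => 2 * (u (s, y) * pdx u (s, y)))
      (fun s => by have := (dx s y).pow 2; simp [mul_assoc] at this; exact this)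
      (by fun_prop) x hx 0 (by simp)
    rw [sq_abs]
    simpa only [zy, ne_eq, OfNat.ofNat_ne_zero, not_false_eq_true, zero_pow, sub_zero, abs_pow, sq_abs] using this
  set X := II (fun p => |u p| * |pdx u p|) 0 1 0 1 with hX
  set Y := II (fun p => |u p| * |pdy u p|) 0 1 0 1 with hY
  have X0 : 0 ≤ X := II_nonneg zero_le_one zero_le_one fun p => by positivity
  have Y0 : 0 ≤ Y := II_nonneg zero_le_one zero_le_one fun p => by positivity
  have iG : ∫ x in (0:ℝ)..1, G x = 2 * Y := by
    rw [hY, ← II_smul]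
    simp only [hG, II, abs_mul, abs_two]
  have iF : ∫ y in (0:ℝ)..1, F y = 2 * X := by
    rw [hX, ← II_smul, II_swap (by fun_prop)]
    simp only [hF, abs_mul, abs_two]
  have X1 : X ≤ Y / 2 + B ^ 2 / (1 - 2 * α₁) := by
    have := wlem hα₁ (t := (1 - 2 * α₁) / 2) (by positivity) cu.abs cx.abs cG sG
    rw [iG] at this
    refine this.trans ?_
    have e : (1 - 2 * α₁) / 2 / 2 / (1 - 2 * α₁) * (2 * Y) = Y / 2 := by field_simp
    rw [e]
    have e : 1 / (2 * ((1 - 2 * α₁) / 2)) = 1 / (1 - 2 * α₁) := by congr 1; ring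
    rw [e, div_mul_eq_mul_div, one_mul]
    gcongr
  have Y1 : Y ≤ X / 2 + B ^ 2 / (1 - 2 * α₂) := by
    have := wlem hα₂ (t := (1 - 2 * α₂) / 2) (by positivity)
      (a := fun p => |u p.swap|) (b := fun p => |pdy u p.swap|) (by fun_prop) (by fun_prop) cF sF
    rw [iF] at this
    rw [hY, II_swap' (by fun_prop)]
    refine this.trans ?_
    have e : (1 - 2 * α₂) / 2 / 2 / (1 - 2 * α₂) * (2 * X) = X / 2 := by field_simp
    rw [e]
    have e : 1 / (2 * ((1 - 2 * α₂) / 2)) = 1 / (1 - 2 * α₂) := by congr 1; ring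
    rw [e, div_mul_eq_mul_div, one_mul]
    gcongr
  have XE : X ≤ 2 * E := by linarith
  have YE : Y ≤ 2 * E := by linarith
  have E0 : 0 ≤ E := by positivity
  have L4 : II (fun p => u p ^ 4) 0 1 0 1 ≤ 4 * (2 * E * (2 * E)) := by
    have h1 : II (fun p => u p ^ 4) 0 1 0 1 ≤ II (fun p => G p.1 * F p.2) 0 1 0 1 := by
      refine II_mono (by fun_prop) (by fun_prop) zero_le_one zero_le_one fun x hx y hy => ?_
      have h1 := sG x hx y hy
      have h2 := sF y hy x hx
      rw [show u (x, y) ^ 4 = |u (x, y)| ^ 2 * |u (x, y)| ^ 2 by rw [sq_abs]; ring]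
      exact mul_le_mul h1 h2 (by positivity) (le_trans (by positivity) h1)
    have h2 : II (fun p => G p.1 * F p.2) 0 1 0 1 = 4 * (Y * X) := by
      unfold II
      simp only [intervalIntegral.integral_const_mul, intervalIntegral.integral_mul_const, iF, iG]
      ring
    rw [h2] at h1
    refine h1.trans ?_
    gcongr
  have L1 : II (fun p => |u p|) 0 1 0 1 ≤ 1 + 4 * (2 * E * (2 * E)) := by
    have h1 : II (fun p => |u p|) 0 1 0 1 ≤ II (fun p => 1 + u p ^ 4) 0 1 0 1 := by
      refine II_mono (by fun_prop) (by fun_prop) zero_le_one zero_le_one fun x hx y hy => ?_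
      rw [abs_le]
      constructor <;> nlinarith [sq_nonneg (u (x, y) ^ 2 - 1/2), sq_nonneg (u (x, y) - 1/2),
        sq_nonneg (u (x, y) + 1/2)]
    rw [II_add continuous_const (by fun_prop)] at h1
    have : II (fun _ => (1:ℝ)) 0 1 0 1 = 1 := by simp [II]
    linarith
  have M1 : II (fun p => |pdx u p|) 0 1 0 1 ≤ C1 := by
    have := wlem hα₁ (t := 1) one_pos (a := fun _ => 1) (G := fun _ => 1) continuous_const cx.abs
      continuous_const (by simp)
    simp only [one_mul, intervalIntegral.integral_const, sub_zero, smul_eq_mul, mul_one] at this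
    linarith
  have M2 : II (fun p => |pdy u p|) 0 1 0 1 ≤ C2 := by
    have := wlem hα₂ (t := 1) one_pos (a := fun _ => 1) (b := fun p => |pdy u p.swap|)
      (G := fun _ => 1) continuous_const (by fun_prop)
      continuous_const (by simp)
    simp only [one_mul, intervalIntegral.integral_const, sub_zero, smul_eq_mul, mul_one] at this
    rw [II_swap' (by fun_prop)]
    linarith
  have EE : 0 ≤ 4 * (2 * E * (2 * E)) := by positivity
  refine ⟨?_, ?_, ?_, ?_⟩ <;> linarith

lemma L1_subseq {u : ℕ → ℝ × ℝ → ℝ} (hu : ∀ n, IsTest (u n)) {C : ℝ}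
    (hx : ∀ n, II (fun p => |pdx (u n) p|) 0 1 0 1 ≤ C)
    (hy : ∀ n, II (fun p => |pdy (u n) p|) 0 1 0 1 ≤ C)
    (h1 : ∀ n, II (fun p => |u n p|) 0 1 0 1 ≤ C) :
    ∃ σ : ℕ → ℕ, StrictMono σ ∧ ∀ ε > 0, ∃ N, ∀ n ≥ N, ∀ k ≥ N,
      II (fun p => |u (σ n) p - u (σ k) p|) 0 1 0 1 < ε := by
  let Φ : ℕ → (Σ N : ℕ, Fin N × Fin N) → ℝ := fun n q =>
    II (u n) (q.2.1 / q.1) ((q.2.1 + 1) / q.1) (q.2.2 / q.1) ((q.2.2 + 1) / q.1)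
  have hΦ : ∀ n, Φ n ∈ (Set.univ.pi fun _ => Icc (-C) C) := by
    rintro n ⟨N, i, j⟩ -
    have hN : (0 : ℝ) < N := by have := i.pos; positivity
    have hb : ∀ i : Fin N, ((i : ℝ) + 1) / N ≤ 1 := fun i => by
      rw [div_le_one hN]; exact_mod_cast i.2
    have hm : ∀ i : Fin N, (i : ℝ) / N ≤ ((i : ℝ) + 1) / N := fun i => by gcongr; linarith
    have c := (test_facts (hu n)).1
    refine abs_le.1 ?_
    refine (II_abs c (hm i) (hm j)).trans (le_trans ?_ (h1 n))
    exact II_mono_set c.abs (fun _ => abs_nonneg _) (by positivity) (hm i) (hb i) (by positivity)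
      (hm j) (hb j)
  obtain ⟨l, -, σ, hσ, hl⟩ := (isCompact_univ_pi fun _ => isCompact_Icc).isSeqCompact hΦ
  refine ⟨σ, hσ, fun ε hε => ?_⟩
  have hC : 0 ≤ C := (II_nonneg zero_le_one zero_le_one fun _ => abs_nonneg _).trans (h1 0)
  obtain ⟨N, hN⟩ := exists_nat_gt (4 * C / (ε / 2))
  have hN0 : (0 : ℝ) < N := lt_of_le_of_lt (by positivity) hN
  have hNn : 0 < N := by exact_mod_cast hN0
  rw [div_lt_iff₀ (by positivity)] at hN
  -- the finite sum is small
  have hs : ∀ i ∈ Finset.range N, ∀ j ∈ Finset.range N, ∃ M, ∀ n ≥ M, ∀ k ≥ M,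
      |II (u (σ n)) (i / N) ((i + 1) / N) (j / N) ((j + 1) / N) -
        II (u (σ k)) (i / N) ((i + 1) / N) (j / N) ((j + 1) / N)| < ε / 2 / (N * N) := by
    intro i hi j hj
    rw [Finset.mem_range] at hi hj
    have := (tendsto_pi_nhds.1 hl ⟨N, ⟨i, hi⟩, ⟨j, hj⟩⟩).cauchySeq
    rw [Metric.cauchySeq_iff] at this
    exact this _ (by positivity)
  choose! M hM using hs
  refine ⟨(Finset.range N ×ˢ Finset.range N).sup fun q => M q.1 q.2, fun n hn k hk => ?_⟩
  obtain ⟨cu, cx, cy, dx, dy, -, -⟩ := test_facts (hu (σ n))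
  obtain ⟨cu', cx', cy', dx', dy', -, -⟩ := test_facts (hu (σ k))
  have g := grid_ineq (w := fun p => u (σ n) p - u (σ k) p)
    (wx := fun p => pdx (u (σ n)) p - pdx (u (σ k)) p)
    (wy := fun p => pdy (u (σ n)) p - pdy (u (σ k)) p) (by fun_prop) (by fun_prop) (by fun_prop)
    (fun x y => (dx x y).sub (dx' x y)) (fun x y => (dy x y).sub (dy' x y)) N hNn
  have tri : ∀ f g : ℝ × ℝ → ℝ, Continuous f → Continuous g →
      II (fun p => |f p|) 0 1 0 1 ≤ C → II (fun p => |g p|) 0 1 0 1 ≤ C →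
      II (fun p => |f p - g p|) 0 1 0 1 ≤ 2 * C := by
    intro f g hf hg h1 h2
    have : II (fun p => |f p - g p|) 0 1 0 1 ≤ II (fun p => |f p| + |g p|) 0 1 0 1 :=
      II_mono (by fun_prop) (by fun_prop) zero_le_one zero_le_one fun x _ y _ => abs_sub _ _
    rw [II_add hf.abs hg.abs] at this
    linarith
  have t1 := tri _ _ cx cx' (hx _) (hx _)
  have t2 := tri _ _ cy cy' (hy _) (hy _)
  have s1 : (∑ i ∈ Finset.range N, ∑ j ∈ Finset.range N,
      |II (fun p => u (σ n) p - u (σ k) p) (i / N) ((i + 1) / N) (j / N) ((j + 1) / N)|) ≤ ε / 2 := by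
    calc _ ≤ ∑ i ∈ Finset.range N, ∑ j ∈ Finset.range N, ε / 2 / (N * N) := by
          refine Finset.sum_le_sum fun i hi => Finset.sum_le_sum fun j hj => ?_
          rw [II_sub cu cu']
          have hle : M i j ≤ (Finset.range N ×ˢ Finset.range N).sup fun q => M q.1 q.2 :=
            Finset.le_sup (f := fun q : ℕ × ℕ => M q.1 q.2) (b := (i, j))
              (Finset.mk_mem_product hi hj)
          exact (hM i hi j hj n (hle.trans hn) k (hle.trans hk)).le
      _ = ε / 2 := by
          simp only [Finset.sum_const, Finset.card_range, nsmul_eq_mul]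
          field_simp
  have s2 : (1 / N : ℝ) * (2 * C + 2 * C) < ε / 2 := by
    rw [one_div_mul_eq_div, div_lt_iff₀ hN0]; linarith
  have s3 : (1 / N : ℝ) * (II (fun p => |pdx (u (σ n)) p - pdx (u (σ k)) p|) 0 1 0 1 +
      II (fun p => |pdy (u (σ n)) p - pdy (u (σ k)) p|) 0 1 0 1) ≤ (1 / N : ℝ) * (2 * C + 2 * C) := by
    gcongr
  linarith

lemma Lm_small {m R s : ℝ} (hm₁ : 1 ≤ m) (hm₂ : m < 4) (hR : 0 < R) (hs : 0 ≤ s) :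
    s ^ m ≤ R ^ (m - 4) * s ^ 4 + R ^ (m - 1) * s := by
  rcases hs.eq_or_lt with rfl | hs
  · rw [Real.zero_rpow (by linarith)]; simp
  rcases le_total s R with h | h
  · have : s ^ m = s ^ (m - 1) * s := by
      rw [← Real.rpow_add_one hs.ne']; congr 1; ring
    rw [this]
    have : s ^ (m - 1) ≤ R ^ (m - 1) := Real.rpow_le_rpow hs.le h (by linarith)
    have h2 : 0 ≤ R ^ (m - 4) * s ^ 4 := by positivity
    nlinarith
  · have : s ^ m = s ^ (m - 4) * s ^ 4 := by
      rw [← Real.rpow_natCast, ← Real.rpow_add hs]; congr 1; push_cast; ring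
    rw [this]
    have : s ^ (m - 4) ≤ R ^ (m - 4) := Real.rpow_le_rpow_of_nonpos hR h (by linarith)
    have h2 : 0 ≤ R ^ (m - 1) * s := by positivity
    have h3 : 0 ≤ s ^ 4 := by positivity
    nlinarith

lemma Lm_cauchy {m : ℝ} (hm₁ : 1 ≤ m) (hm₂ : m < 4) {u : ℕ → ℝ × ℝ → ℝ}
    (hu : ∀ n, Continuous (u n)) {C : ℝ}
    (h4 : ∀ n, II (fun p => u n p ^ 4) 0 1 0 1 ≤ C)
    (hc : ∀ ε > 0, ∃ N, ∀ n ≥ N, ∀ k ≥ N, II (fun p => |u n p - u k p|) 0 1 0 1 < ε) :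
    ∀ ε > 0, ∃ N, ∀ n ≥ N, ∀ k ≥ N, II (fun p => |u n p - u k p| ^ m) 0 1 0 1 < ε := by
  intro ε hε
  have hC : 0 ≤ C := (II_nonneg zero_le_one zero_le_one fun _ => by positivity).trans (h4 0)
  have hl : Tendsto (fun R : ℝ => R ^ (m - 4) * (16 * C)) atTop (nhds (0 * (16 * C))) := by
    refine Tendsto.mul_const _ ?_
    have := tendsto_rpow_neg_atTop (y := 4 - m) (by linarith)
    simpa using this
  rw [zero_mul] at hl
  obtain ⟨R, hR1, hR⟩ := ((hl.eventually (gt_mem_nhds (half_pos hε))).and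
    (eventually_gt_atTop 0)).exists
  obtain ⟨N, hN⟩ := hc (ε / 2 / R ^ (m - 1)) (by positivity)
  refine ⟨N, fun n hn k hk => ?_⟩
  have a1 := hN n hn k hk
  have := hu n
  have := hu k
  rw [lt_div_iff₀ (by positivity)] at a1
  have cm : Continuous fun p => |u n p - u k p| ^ m :=
    (Real.continuous_rpow_const (by linarith)).comp (by fun_prop)
  have b : II (fun p => |u n p - u k p| ^ m) 0 1 0 1 ≤
      II (fun p => R ^ (m - 4) * (8 * (u n p ^ 4 + u k p ^ 4)) + R ^ (m - 1) * |u n p - u k p|)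
        0 1 0 1 := by
    refine II_mono cm (by fun_prop) zero_le_one zero_le_one fun x _ y _ => ?_
    refine (Lm_small hm₁ hm₂ hR (abs_nonneg _)).trans ?_
    have : |u n (x, y) - u k (x, y)| ^ 4 ≤ 8 * (u n (x, y) ^ 4 + u k (x, y) ^ 4) := by
      rw [(by decide : Even 4).pow_abs]
      generalize u n (x, y) = a
      generalize u k (x, y) = b
      have h1 : (a - b) ^ 2 ≤ 2 * (a ^ 2 + b ^ 2) := by nlinarith [sq_nonneg (a + b)]
      have h2 : ((a - b) ^ 2) ^ 2 ≤ (2 * (a ^ 2 + b ^ 2)) ^ 2 := by gcongr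
      nlinarith [sq_nonneg (a ^ 2 - b ^ 2)]
    gcongr
  rw [II_add (by fun_prop) (by fun_prop), II_smul, II_smul, II_smul,
    II_add (by fun_prop) (by fun_prop)] at b
  have c1 : R ^ (m - 4) * (8 * (II (fun p => u n p ^ 4) 0 1 0 1 + II (fun p => u k p ^ 4) 0 1 0 1))
      ≤ R ^ (m - 4) * (16 * C) := by
    refine mul_le_mul_of_nonneg_left ?_ (by positivity)
    linarith [h4 n, h4 k]
  linarith

lemma memLp_cont {m : ℝ} {f : ℝ × ℝ → ℝ} (hf : Continuous f) :
    MemLp f (ENNReal.ofReal m) (volume.restrict Omega) := by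
  have hK : IsCompact (Icc (0:ℝ) 1 ×ˢ Icc (0:ℝ) 1) := isCompact_Icc.prod isCompact_Icc
  have hs : Omega ⊆ Icc (0:ℝ) 1 ×ˢ Icc (0:ℝ) 1 := prod_mono Ioo_subset_Icc_self Ioo_subset_Icc_self
  obtain ⟨c, hc⟩ := hK.exists_bound_of_continuousOn hf.continuousOn
  have hm : MeasurableSet Omega := measurableSet_Ioo.prod measurableSet_Ioo
  have : IsFiniteMeasure (volume.restrict Omega) :=
    ⟨by simpa using (measure_mono hs).trans_lt hK.measure_lt_top⟩
  refine MemLp.of_bound hf.aestronglyMeasurable c ?_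
  filter_upwards [ae_restrict_mem hm] with p hp using hc p (hs hp)

lemma Lm_limit {m : ℝ} (hm₁ : 1 ≤ m) {u : ℕ → ℝ × ℝ → ℝ}
    (hu : ∀ n, Continuous (u n))
    (hc : ∀ ε > 0, ∃ N, ∀ n ≥ N, ∀ k ≥ N, II (fun p => |u n p - u k p| ^ m) 0 1 0 1 < ε) :
    ∃ v : ℝ × ℝ → ℝ, MemLp v (ENNReal.ofReal m) (volume.restrict Omega) ∧
      Tendsto (fun n => ∫ p in Omega, |u n p - v p| ^ m) atTop (nhds 0) := by
  have m0 : 0 < m := by linarith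
  have hp0 : ENNReal.ofReal m ≠ 0 := by simpa using m0
  have : Fact (1 ≤ ENNReal.ofReal m) := ⟨by simpa using hm₁⟩
  let f : ℕ → Lp ℝ (ENNReal.ofReal m) (volume.restrict Omega) := fun n =>
    (memLp_cont (m := m) (hu n)).toLp (u n)
  have key : ∀ g : ℝ × ℝ → ℝ, MemLp g (ENNReal.ofReal m) (volume.restrict Omega) →
      (eLpNorm g (ENNReal.ofReal m) (volume.restrict Omega)).toReal ^ m
        = ∫ p in Omega, |g p| ^ m := by
    intro g hg
    have nn : 0 ≤ ∫ p in Omega, |g p| ^ m := integral_nonneg fun p => by positivity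
    rw [hg.eLpNorm_eq_integral_rpow_norm hp0 ENNReal.ofReal_ne_top, ENNReal.toReal_ofReal m0.le]
    simp only [Real.norm_eq_abs]
    rw [ENNReal.toReal_ofReal (by positivity), ← Real.rpow_mul nn, inv_mul_cancel₀ m0.ne',
      Real.rpow_one]
  have hcf : CauchySeq f := by
    rw [Metric.cauchySeq_iff]
    intro ε hε
    obtain ⟨N, hN⟩ := hc (ε ^ m) (by positivity)
    refine ⟨N, fun n hn k hk => ?_⟩
    have h1 := hN n hn k hk
    have := hu n
    have := hu k
    rw [← omega_int (F := fun p => |u n p - u k p| ^ m)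
      ((Real.continuous_rpow_const m0.le).comp (by fun_prop))] at h1
    have h2 := key (u n - u k) (memLp_cont (by fun_prop))
    simp only [Pi.sub_apply] at h2
    rw [← h2] at h1
    have h3 := (Real.rpow_lt_rpow_iff ENNReal.toReal_nonneg hε.le m0).1 h1
    rw [dist_eq_norm, ← MemLp.toLp_sub, Lp.norm_toLp]
    exact h3
  obtain ⟨v, hv⟩ := cauchySeq_tendsto_of_complete hcf
  refine ⟨v, Lp.memLp v, ?_⟩
  have h1 := (tendsto_iff_norm_sub_tendsto_zero.1 hv).rpow_const (p := m) (Or.inr m0.le)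
  rw [Real.zero_rpow m0.ne'] at h1
  refine h1.congr fun n => ?_
  have h2 := key _ ((memLp_cont (m := m) (hu n)).sub (Lp.memLp v))
  simp only [Pi.sub_apply] at h2
  rw [← h2]
  congr 1
  rw [Lp.norm_def]
  congr 1
  refine eLpNorm_congr_ae ?_
  filter_upwards [Lp.coeFn_sub (f n) v, MemLp.coeFn_toLp (memLp_cont (m := m) (hu n))] with p a b
  rw [a]
  simp only [Pi.sub_apply, f, b]

/-- Compact embedding of `𝓗₀¹(Ω)` into `L^m(Ω)` for `1 ≤ m < 4`:
every sequence of test functions bounded in the `𝓗¹` norm has a subsequence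
converging in `L^m(Ω)`. -/
theorem compact_embedding_Lm (α₁ α₂ m : ℝ)
    (hα₁ : α₁ ∈ Ioo (0:ℝ) (1/2)) (hα₂ : α₂ ∈ Ioo (0:ℝ) (1/2))
    (hm₁ : 1 ≤ m) (hm₂ : m < 4)
    (u : ℕ → ℝ × ℝ → ℝ) (hu : ∀ n, IsTest (u n))
    (hbdd : ∃ B : ℝ, ∀ n, H1Norm α₁ α₂ (u n) (pdx (u n)) (pdy (u n)) ≤ B) :
    ∃ σ : ℕ → ℕ, StrictMono σ ∧ ∃ v : ℝ × ℝ → ℝ,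
      MemLp v (ENNReal.ofReal m) (volume.restrict Omega) ∧
      Tendsto (fun n => ∫ p in Omega, |u (σ n) p - v p| ^ m) atTop (nhds 0) := by
  obtain ⟨B, hB⟩ := hbdd
  obtain ⟨C, hC⟩ := bounds (B := B) hα₁ hα₂
  have h := fun n => hC (u n) (hu n) (hB n)
  obtain ⟨σ, hσ, hc⟩ := L1_subseq hu (fun n => (h n).1) (fun n => (h n).2.1) (fun n => (h n).2.2.1)
  have cu := fun n => (test_facts (hu (σ n))).1
  obtain ⟨v, hv, ht⟩ := Lm_limit hm₁ cu
    (Lm_cauchy hm₁ hm₂ cu (fun n => (h (σ n)).2.2.2) hc)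
  exact ⟨σ, hσ, v, hv, ht⟩
end
end

section
/- (Difference quotient estimate) Let Ω' be an open set with closure contained in Ω. Then there is a constant C > 0, depending only on Ω', α₁, α₂, such that for every u ∈ 𝓗₀¹(Ω), every i ∈ {1,2}, and every real l with 0 < |l| < (1/2)·dist(Ω', ∂Ω), the difference quotients D_i^l u(s) = (u(s + l e_i) − u(s))/l satisfy ∫_{Ω'} |D₁^l u|² + |D₂^l u|² dxdy ≤ C ∫_Ω y^{2α₁}|∂ₓu|² + x^{2α₂}|∂_yu|² dxdy ≤ C‖u‖_{𝓗¹}². -/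
open MeasureTheory Set Filter

noncomputable section

/-- The distance `dist(A, B) = inf { dist a b : a ∈ A, b ∈ B }` between two sets. -/
def setDist (A B : Set (ℝ × ℝ)) : ℝ :=
  sInf ((fun q : (ℝ × ℝ) × (ℝ × ℝ) => dist q.1 q.2) '' (A ×ˢ B))

theorem aux_esq {X : Type*} [MeasurableSpace X] (μ : Measure X) (f : X → ℝ) :
    eLpNorm f 2 μ ^ 2 = ∫⁻ x, ‖f x‖ₑ ^ 2 ∂μ := by
  have h := eLpNorm_nnreal_pow_eq_lintegral (μ := μ) (f := f) (p := 2) (by norm_num)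
  simpa using h

theorem aux_int_sq {X : Type*} [MeasurableSpace X] (μ : Measure X) (f : X → ℝ)
    (hf : MemLp f 2 μ) : ∫ x, f x ^ 2 ∂μ = (eLpNorm f 2 μ).toReal ^ 2 := by
  rw [← ENNReal.toReal_pow, aux_esq, integral_eq_lintegral_of_nonneg_ae
    (ae_of_all _ fun x => sq_nonneg _) (hf.1.pow 2)]
  congr 1
  apply lintegral_congr
  intro x
  rw [← enorm_pow, Real.enorm_eq_ofReal (sq_nonneg _)]

theorem aux_jensen (φ : ℝ × ℝ → ℝ) (hφ : ContDiff ℝ (⊤ : ℕ∞) φ) (v : ℝ × ℝ) (l : ℝ) (hl : l ≠ 0)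
    (p : ℝ × ℝ) : ‖(φ (p + l • v) - φ p) / l‖ₑ ^ 2 ≤
      ∫⁻ s in Icc (0:ℝ) 1, ‖fderiv ℝ φ (p + (s * l) • v) v‖ₑ ^ 2 := by
  have hd : Differentiable ℝ φ := hφ.differentiable (by simp)
  have hc : Continuous (fun s : ℝ => fderiv ℝ φ (p + (s * l) • v) v) := by
    have := hφ.continuous_fderiv (by simp)
    fun_prop
  have h1 : ∫ s in (0:ℝ)..1, l * fderiv ℝ φ (p + (s * l) • v) v = φ (p + l • v) - φ p := by
    have := intervalIntegral.integral_eq_sub_of_hasDerivAt (a := 0) (b := 1)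
      (f := fun s : ℝ => φ (p + (s * l) • v))
      (f' := fun s => l * fderiv ℝ φ (p + (s * l) • v) v) ?_ ?_
    · simpa using this
    · intro s _
      have h2 : HasDerivAt (fun s : ℝ => p + (s * l) • v) (l • v) s := by
        have := (((hasDerivAt_id s).mul_const l).smul_const v).const_add p
        simpa using this
      have := (hd (p + (s * l) • v)).hasFDerivAt.comp_hasDerivAt s h2
      simpa [Function.comp_def] using this
    · exact (continuous_const.mul hc).intervalIntegrable _ _
  have h2 : (φ (p + l • v) - φ p) / l = ∫ s in Icc (0:ℝ) 1, fderiv ℝ φ (p + (s * l) • v) v := by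
    rw [← h1, intervalIntegral.integral_const_mul, mul_div_cancel_left₀ _ hl,
      intervalIntegral.integral_of_le zero_le_one, integral_Icc_eq_integral_Ioc]
  haveI : IsProbabilityMeasure (volume.restrict (Icc (0:ℝ) 1)) := ⟨by simp⟩
  rw [h2, ← aux_esq]
  gcongr
  refine (enorm_integral_le_lintegral_enorm _).trans ?_
  rw [← eLpNorm_one_eq_lintegral_enorm]
  exact eLpNorm_le_eLpNorm_of_exponent_le (by norm_num) hc.aestronglyMeasurable

theorem aux_trans (S T : Set (ℝ × ℝ)) (hT : MeasurableSet T) (a : ℝ × ℝ)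
    (h : ∀ p ∈ S, p + a ∈ T) (f : ℝ × ℝ → ENNReal) (hf : Measurable f) :
    ∫⁻ p in S, f (p + a) ≤ ∫⁻ p in T, f p := by
  have hp := (measurePreserving_add_right (volume : Measure (ℝ × ℝ)) a).restrict_preimage hT
  rw [← hp.lintegral_comp hf]
  exact lintegral_mono_set h

theorem aux_test (φ : ℝ × ℝ → ℝ) (hφ : ContDiff ℝ (⊤ : ℕ∞) φ) (v : ℝ × ℝ) (l : ℝ) (hl : l ≠ 0)
    (S T : Set (ℝ × ℝ)) (hT : MeasurableSet T)
    (h : ∀ p ∈ S, ∀ s ∈ Icc (0:ℝ) 1, p + (s * l) • v ∈ T) :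
    eLpNorm (fun p => (φ (p + l • v) - φ p) / l) 2 (volume.restrict S) ≤
      eLpNorm (fun p => fderiv ℝ φ p v) 2 (volume.restrict T) := by
  have hfc : Continuous (fderiv ℝ φ) := hφ.continuous_fderiv (by simp)
  have hsq : eLpNorm (fun p => (φ (p + l • v) - φ p) / l) 2 (volume.restrict S) ^ 2 ≤
      eLpNorm (fun p => fderiv ℝ φ p v) 2 (volume.restrict T) ^ 2 := by
    rw [aux_esq, aux_esq]
    calc _ ≤ ∫⁻ p in S, ∫⁻ s in Icc (0:ℝ) 1, ‖fderiv ℝ φ (p + (s * l) • v) v‖ₑ ^ 2 :=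
          lintegral_mono fun p => aux_jensen φ hφ v l hl p
      _ = ∫⁻ s in Icc (0:ℝ) 1, ∫⁻ p in S, ‖fderiv ℝ φ (p + (s * l) • v) v‖ₑ ^ 2 := by
          apply lintegral_lintegral_swap
          apply Measurable.aemeasurable
          apply Continuous.measurable
          unfold Function.uncurry
          fun_prop
      _ ≤ ∫⁻ s in Icc (0:ℝ) 1, ∫⁻ p in T, ‖fderiv ℝ φ p v‖ₑ ^ 2 := by
          apply setLIntegral_mono' measurableSet_Icc
          intro s hs
          refine aux_trans S T hT ((s * l) • v) (fun p hp => h p hp s hs)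
            (fun p => ‖fderiv ℝ φ p v‖ₑ ^ 2) ?_
          apply Continuous.measurable
          fun_prop
      _ = _ := by simp
  exact (ENNReal.pow_le_pow_left_iff two_ne_zero).1 hsq

theorem aux_measOmega : MeasurableSet Omega := measurableSet_Ioo.prod measurableSet_Ioo

theorem aux_main (v : ℝ × ℝ) (l : ℝ) (hl : l ≠ 0)
    (S T : Set (ℝ × ℝ)) (hT : MeasurableSet T) (hTO : T ⊆ Omega)
    (h : ∀ p ∈ S, ∀ s ∈ Icc (0:ℝ) 1, p + (s * l) • v ∈ T)
    (w : ℝ × ℝ → ℝ) (hw : Continuous w) (K : ℝ) (hK : 0 ≤ K) (hKw : ∀ p ∈ T, 1 ≤ K * w p)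
    (u g : ℝ × ℝ → ℝ) (hu : MemLp u 2 (volume.restrict Omega))
    (hg : MemLp (fun p => w p * g p) 2 (volume.restrict Omega))
    (happ : ∀ ε : ℝ, 0 < ε → ∃ φ : ℝ × ℝ → ℝ, IsTest φ ∧
      ∫ p in Omega, (u p - φ p) ^ 2 < ε ^ 2 ∧
      ∫ p in Omega, (w p * (g p - fderiv ℝ φ p v)) ^ 2 < ε ^ 2) :
    MemLp (fun p => (u (p + l • v) - u p) / l) 2 (volume.restrict S) ∧
    ∫ p in S, ((u (p + l • v) - u p) / l) ^ 2 ≤ K ^ 2 * ∫ p in Omega, (w p * g p) ^ 2 := by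
  have hST : ∀ p ∈ S, p + l • v ∈ Omega := fun p hp => hTO (by simpa using h p hp 1 (by simp))
  have hSO : S ⊆ Omega := fun p hp => hTO (by simpa using h p hp 0 (by simp))
  have hrest := Measure.restrict_mono hSO (le_refl (volume : Measure (ℝ × ℝ)))
  have hp := (measurePreserving_add_right (volume : Measure (ℝ × ℝ)) (l • v)).restrict_preimage
    aux_measOmega
  have hrest2 : volume.restrict S ≤ volume.restrict ((fun p => p + l • v) ⁻¹' Omega) :=
    Measure.restrict_mono hST le_rfl
  have hshift : ∀ f : ℝ × ℝ → ℝ, MemLp f 2 (volume.restrict Omega) →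
      MemLp (fun p => f (p + l • v)) 2 (volume.restrict S) ∧
      eLpNorm (fun p => f (p + l • v)) 2 (volume.restrict S) ≤
        eLpNorm f 2 (volume.restrict Omega) := by
    intro f hf
    refine ⟨(hf.comp_measurePreserving hp).mono_measure hrest2, ?_⟩
    refine (eLpNorm_mono_measure _ hrest2).trans ?_
    rw [← eLpNorm_comp_measurePreserving hf.1 hp]
    rfl
  have hD : ∀ f : ℝ × ℝ → ℝ, MemLp f 2 (volume.restrict Omega) →
      MemLp (fun p => (f (p + l • v) - f p) / l) 2 (volume.restrict S) ∧
      eLpNorm (fun p => (f (p + l • v) - f p) / l) 2 (volume.restrict S) ≤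
        ‖l⁻¹‖ₑ * (2 * eLpNorm f 2 (volume.restrict Omega)) := by
    intro f hf
    obtain ⟨h1, h2⟩ := hshift f hf
    have h3 := hf.mono_measure hrest
    have he : (fun p => (f (p + l • v) - f p) / l) =
        l⁻¹ • ((fun p => f (p + l • v)) - f) := by
      ext p; simp [div_eq_inv_mul]
    rw [he]
    refine ⟨(h1.sub h3).const_smul _, ?_⟩
    rw [eLpNorm_const_smul, two_mul]
    gcongr
    refine (eLpNorm_sub_le h1.1 h3.1 (by norm_num)).trans ?_
    gcongr
  have hmem := (hD u hu).1
  refine ⟨hmem, ?_⟩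
  have hsmall : ∀ (f : ℝ × ℝ → ℝ) (ε : ℝ), 0 < ε → MemLp f 2 (volume.restrict Omega) →
      ∫ p in Omega, f p ^ 2 < ε ^ 2 → (eLpNorm f 2 (volume.restrict Omega)).toReal ≤ ε := by
    intro f ε hε hf hlt
    rw [aux_int_sq _ _ hf] at hlt
    exact (abs_le_of_sq_le_sq' hlt.le hε.le).2
  have key : ∀ ε : ℝ, 0 < ε →
      (eLpNorm (fun p => (u (p + l • v) - u p) / l) 2 (volume.restrict S)).toReal ≤
      K * (eLpNorm (fun p => w p * g p) 2 (volume.restrict Omega)).toReal +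
        (2 * |l⁻¹| + K) * ε := by
    intro ε hε
    obtain ⟨φ, ⟨hφ1, hφ2, hφ3⟩, ha, hb⟩ := happ ε hε
    have hφm : MemLp φ 2 (volume.restrict Omega) :=
      (hφ1.continuous.memLp_of_hasCompactSupport hφ2).restrict _
    have hfc : Continuous (fderiv ℝ φ) := hφ1.continuous_fderiv (by simp)
    have hdm : MemLp (fun p => w p * fderiv ℝ φ p v) 2 (volume.restrict Omega) := by
      refine (Continuous.memLp_of_hasCompactSupport (by fun_prop) ?_).restrict _
      exact (hφ2.fderiv_apply ℝ v).mul_left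
    have hum := hu.sub hφm
    have hgm : MemLp (fun p => w p * (g p - fderiv ℝ φ p v)) 2 (volume.restrict Omega) := by
      have := hg.sub hdm
      convert this using 1
      ext p; simp [mul_sub]
    have ha' := hsmall _ ε hε hum ha
    have hb' := hsmall _ ε hε hgm hb
    -- estimate
    have e1 : (fun p => (u (p + l • v) - u p) / l) =
        (fun p => ((u - φ) (p + l • v) - (u - φ) p) / l) +
          (fun p => (φ (p + l • v) - φ p) / l) := by
      ext p; simp; ring
    have e2 : (fun p => w p * fderiv ℝ φ p v) =
        (fun p => w p * g p) - (fun p => w p * (g p - fderiv ℝ φ p v)) := by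
      ext p; simp; ring
    have m1 := hD _ hum
    have m2 := hD _ hφm
    have b1 : eLpNorm (fun p => fderiv ℝ φ p v) 2 (volume.restrict T) ≤
        ENNReal.ofReal K * eLpNorm (fun p => w p * fderiv ℝ φ p v) 2 (volume.restrict Omega) := by
      calc _ ≤ eLpNorm (K • fun p => w p * fderiv ℝ φ p v) 2 (volume.restrict T) := by
            apply eLpNorm_mono_ae
            filter_upwards [ae_restrict_mem hT] with p hpT
            have := hKw p hpT
            simp only [Pi.smul_apply, smul_eq_mul, ← mul_assoc]
            rw [norm_mul]
            refine le_mul_of_one_le_left (norm_nonneg _) ?_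
            exact this.trans (le_abs_self _)
        _ ≤ _ := by
            rw [eLpNorm_const_smul, Real.enorm_eq_ofReal hK]
            gcongr
    have c1 : eLpNorm (fun p => (u (p + l • v) - u p) / l) 2 (volume.restrict S) ≤
        ‖l⁻¹‖ₑ * (2 * eLpNorm (u - φ) 2 (volume.restrict Omega)) +
        ENNReal.ofReal K * (eLpNorm (fun p => w p * g p) 2 (volume.restrict Omega) +
          eLpNorm (fun p => w p * (g p - fderiv ℝ φ p v)) 2 (volume.restrict Omega)) := by
      rw [e1]
      refine (eLpNorm_add_le m1.1.1 m2.1.1 (by norm_num)).trans ?_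
      refine add_le_add m1.2 ((aux_test φ hφ1 v l hl S T hT h).trans (b1.trans ?_))
      gcongr
      rw [e2]
      exact eLpNorm_sub_le hg.1 hgm.1 (by norm_num)
    have f1 := hum.2.ne
    have f2 := hg.2.ne
    have f3 := hgm.2.ne
    have c2 := ENNReal.toReal_mono (by finiteness) c1
    rw [ENNReal.toReal_add (by finiteness) (by finiteness), ENNReal.toReal_mul, ENNReal.toReal_mul,
      ENNReal.toReal_mul, ENNReal.toReal_add (by finiteness) (by finiteness),
      ENNReal.toReal_ofReal hK, toReal_enorm, Real.norm_eq_abs] at c2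
    have d1 := mul_le_mul_of_nonneg_left ha' (abs_nonneg l⁻¹)
    have d2 := mul_le_mul_of_nonneg_left hb' hK
    simp only [ENNReal.toReal_ofNat] at c2
    nlinarith
  rw [aux_int_sq _ _ hmem, aux_int_sq _ _ hg, ← mul_pow]
  refine pow_le_pow_left₀ ENNReal.toReal_nonneg ?_ 2
  have hM : 0 < 2 * |l⁻¹| + K := by
    have : 0 < |l⁻¹| := abs_pos.2 (inv_ne_zero hl)
    linarith
  refine le_of_forall_pos_le_add fun ε hε => ?_
  have := key (ε / (2 * |l⁻¹| + K)) (by positivity)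
  rwa [mul_div_cancel₀ _ hM.ne'] at this

theorem aux_dist (Ω' : Set (ℝ × ℝ)) (hΩ' : Ω' ⊆ Omega) (l : ℝ)
    (hl : |l| < setDist Ω' (frontier Omega) / 2) (p : ℝ × ℝ) (hp : p ∈ Ω') :
    |l| < p.1 ∧ |l| < 1 - p.1 ∧ |l| < p.2 ∧ |l| < 1 - p.2 := by
  obtain ⟨⟨h1, h2⟩, h3, h4⟩ := hΩ' hp
  have hf : frontier Omega = Icc (0:ℝ) 1 ×ˢ {0, 1} ∪ {0, 1} ×ˢ Icc (0:ℝ) 1 := by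
    rw [Omega, frontier_prod_eq, closure_Ioo zero_ne_one, frontier_Ioo zero_lt_one]
  have hl0 := abs_nonneg l
  have hb : ∀ q ∈ frontier Omega, 2 * |l| < dist p q := by
    intro q hq
    have : setDist Ω' (frontier Omega) ≤ dist p q :=
      csInf_le ⟨0, by rintro _ ⟨r, _, rfl⟩; exact dist_nonneg⟩ ⟨(p, q), ⟨hp, hq⟩, rfl⟩
    linarith
  rw [hf] at hb
  have a1 := hb (0, p.2) (Or.inr ⟨by simp, h3.le, h4.le⟩)
  have a2 := hb (1, p.2) (Or.inr ⟨by simp, h3.le, h4.le⟩)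
  have a3 := hb (p.1, 0) (Or.inl ⟨⟨h1.le, h2.le⟩, by simp⟩)
  have a4 := hb (p.1, 1) (Or.inl ⟨⟨h1.le, h2.le⟩, by simp⟩)
  simp only [Prod.dist_eq, dist_self, Real.dist_eq, sub_zero, dist_nonneg, abs_nonneg,
    max_eq_left, max_eq_right] at a1 a2 a3 a4
  rw [abs_of_pos h1] at a1
  rw [abs_of_pos h3] at a3
  rw [abs_of_neg (by linarith : p.1 - 1 < 0)] at a2
  rw [abs_of_neg (by linarith : p.2 - 1 < 0)] at a4
  refine ⟨?_, ?_, ?_, ?_⟩ <;> linarith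

theorem aux_delta (Ω' : Set (ℝ × ℝ)) (hΩ' : closure Ω' ⊆ Omega) :
    ∃ δ : ℝ, 0 < δ ∧ ∀ p ∈ Ω', δ ≤ p.1 ∧ δ ≤ p.2 := by
  have hb : Bornology.IsBounded (closure Ω') :=
    ((Metric.isBounded_Ioo (0:ℝ) 1).prod (Metric.isBounded_Ioo (0:ℝ) 1)).subset hΩ'
  have hcp : IsCompact (closure Ω') := Metric.isCompact_of_isClosed_isBounded isClosed_closure hb
  obtain ⟨δ, hδ, hs⟩ := hcp.exists_cthickening_subset_open (isOpen_Ioo.prod isOpen_Ioo) hΩ'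
  refine ⟨δ, hδ, fun p hp => ?_⟩
  have hq : p - (δ, δ) ∈ Omega := by
    apply hs
    apply Metric.mem_cthickening_of_dist_le _ p _ _ (subset_closure hp)
    simp [dist_eq_norm, Prod.norm_def, abs_of_pos hδ]
  obtain ⟨⟨h1, _⟩, h2, _⟩ := hq
  simp at h1 h2
  exact ⟨h1.le, h2.le⟩


/-- Difference quotient estimate: for `Ω' ⊂⊂ Ω` there is `C > 0`
such that for every `u ∈ 𝓗₀¹(Ω)` and every `l` with `0 < |l| < dist(Ω',∂Ω)/2`,
`∫_{Ω'} |D₁^l u|² + |D₂^l u|² ≤ C ∫_Ω y^{2α₁}|∂ₓu|² + x^{2α₂}|∂_yu|² ≤ C ‖u‖_{𝓗¹}²`. -/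
theorem difference_quotient_estimate (α₁ α₂ : ℝ)
    (hα₁ : α₁ ∈ Ioo (0:ℝ) (1/2)) (hα₂ : α₂ ∈ Ioo (0:ℝ) (1/2))
    (Ω' : Set (ℝ × ℝ)) (hΩ'open : IsOpen Ω') (hΩ' : closure Ω' ⊆ Omega) :
    ∃ C : ℝ, 0 < C ∧ ∀ u gx gy : ℝ × ℝ → ℝ, MemH10 α₁ α₂ u gx gy →
      ∀ l : ℝ, l ≠ 0 → |l| < setDist Ω' (frontier Omega) / 2 →
        (∫ p in Ω', (((u (p + (l, 0)) - u p) / l) ^ 2 +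
            ((u (p + (0, l)) - u p) / l) ^ 2)) ≤
          C * (∫ p in Omega, (p.2 ^ (2*α₁) * (gx p) ^ 2 + p.1 ^ (2*α₂) * (gy p) ^ 2)) ∧
        C * (∫ p in Omega, (p.2 ^ (2*α₁) * (gx p) ^ 2 + p.1 ^ (2*α₂) * (gy p) ^ 2)) ≤
          C * (H1Norm α₁ α₂ u gx gy) ^ 2 := by
  obtain ⟨δ, hδ, hδp⟩ := aux_delta Ω' hΩ'
  have hsub : Ω' ⊆ Omega := subset_closure.trans hΩ'
  set K := δ ^ (-α₁) + δ ^ (-α₂) with hKdef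
  have k1 : 0 < δ ^ (-α₁) := Real.rpow_pos_of_pos hδ _
  have k2 : 0 < δ ^ (-α₂) := Real.rpow_pos_of_pos hδ _
  have hK : 0 < K := add_pos k1 k2
  have hKb : ∀ α t : ℝ, 0 < α → δ ^ (-α) ≤ K → δ ≤ t → 1 ≤ K * t ^ α := by
    intro α t hα hk ht
    calc (1:ℝ) = δ ^ (-α) * δ ^ α := by
          rw [← Real.rpow_add hδ]; simp
      _ ≤ K * t ^ α := by
          gcongr
  refine ⟨K ^ 2, by positivity, fun u gx gy hu l hl0 hl => ?_⟩
  obtain ⟨hm, happ⟩ := hu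
  have i1 := hm.wgx.integrable_sq
  have i2 := hm.wgy.integrable_sq
  have hI : (∫ p in Omega, (p.2 ^ (2*α₁) * (gx p) ^ 2 + p.1 ^ (2*α₂) * (gy p) ^ 2)) =
      (∫ p in Omega, (p.2 ^ α₁ * gx p) ^ 2) + ∫ p in Omega, (p.1 ^ α₂ * gy p) ^ 2 := by
    rw [← integral_add i1 i2]
    apply setIntegral_congr_fun aux_measOmega
    rintro p ⟨⟨h1, _⟩, h2, _⟩
    simp only [mul_pow]
    rw [← Real.rpow_natCast (p.2 ^ α₁), ← Real.rpow_mul h2.le, ← Real.rpow_natCast (p.1 ^ α₂),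
      ← Real.rpow_mul h1.le]
    simp [mul_comm]
  have n0 : 0 ≤ ∫ p in Omega, (u p) ^ 2 := integral_nonneg fun _ => sq_nonneg _
  have n1 : 0 ≤ ∫ p in Omega, (p.2 ^ α₁ * gx p) ^ 2 := integral_nonneg fun _ => sq_nonneg _
  have n2 : 0 ≤ ∫ p in Omega, (p.1 ^ α₂ * gy p) ^ 2 := integral_nonneg fun _ => sq_nonneg _
  rw [hI]
  constructor
  swap
  · apply mul_le_mul_of_nonneg_left _ (by positivity)
    rw [H1Norm, Real.sq_sqrt (by positivity)]
    linarith
  have hsl : ∀ s ∈ Icc (0:ℝ) 1, |s * l| ≤ |l| := by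
    rintro s ⟨hs0, hs1⟩
    rw [abs_mul, abs_of_nonneg hs0]
    exact mul_le_of_le_one_left (abs_nonneg _) hs1
  have happ' : ∀ ε : ℝ, 0 < ε → ∃ φ : ℝ × ℝ → ℝ, IsTest φ ∧
      ∫ p in Omega, (u p - φ p) ^ 2 < ε ^ 2 ∧
      ∫ p in Omega, (p.2 ^ α₁ * (gx p - pdx φ p)) ^ 2 < ε ^ 2 ∧
      ∫ p in Omega, (p.1 ^ α₂ * (gy p - pdy φ p)) ^ 2 < ε ^ 2 := by
    intro ε hε
    obtain ⟨φ, hφ, hlt⟩ := happ ε hε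
    rw [H1Norm, Real.sqrt_lt' hε] at hlt
    have m0 : 0 ≤ ∫ p in Omega, (u p - φ p) ^ 2 := integral_nonneg fun _ => sq_nonneg _
    have m1 : 0 ≤ ∫ p in Omega, (p.2 ^ α₁ * (gx p - pdx φ p)) ^ 2 :=
      integral_nonneg fun _ => sq_nonneg _
    have m2 : 0 ≤ ∫ p in Omega, (p.1 ^ α₂ * (gy p - pdy φ p)) ^ 2 :=
      integral_nonneg fun _ => sq_nonneg _
    exact ⟨φ, hφ, by linarith, by linarith, by linarith⟩
  have r1 := aux_main (1, 0) l hl0 Ω' (Omega ∩ {p | δ ≤ p.2})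
    (aux_measOmega.inter (measurableSet_le measurable_const measurable_snd)) inter_subset_left
    (by
      intro p hp s hs
      obtain ⟨a1, a2, a3, a4⟩ := aux_dist Ω' hsub l hl p hp
      obtain ⟨⟨h1, h2⟩, h3, h4⟩ := hsub hp
      have b := abs_le.1 (hsl s hs)
      refine ⟨⟨⟨?_, ?_⟩, ?_, ?_⟩, ?_⟩ <;> simp <;> linarith [(hδp p hp).2])
    (fun p => p.2 ^ α₁) (by
      exact continuous_snd.rpow_const fun _ => Or.inr hα₁.1.le) K hK.le
    (fun p hp => hKb _ _ hα₁.1 (by linarith) hp.2) u gx hm.memL2 hm.wgx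
    (fun ε hε => by
      obtain ⟨φ, h1, h2, h3, h4⟩ := happ' ε hε
      exact ⟨φ, h1, h2, h3⟩)
  have r2 := aux_main (0, 1) l hl0 Ω' (Omega ∩ {p | δ ≤ p.1})
    (aux_measOmega.inter (measurableSet_le measurable_const measurable_fst)) inter_subset_left
    (by
      intro p hp s hs
      obtain ⟨a1, a2, a3, a4⟩ := aux_dist Ω' hsub l hl p hp
      obtain ⟨⟨h1, h2⟩, h3, h4⟩ := hsub hp
      have b := abs_le.1 (hsl s hs)
      refine ⟨⟨⟨?_, ?_⟩, ?_, ?_⟩, ?_⟩ <;> simp <;> linarith [(hδp p hp).1])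
    (fun p => p.1 ^ α₂) (by
      exact continuous_fst.rpow_const fun _ => Or.inr hα₂.1.le) K hK.le
    (fun p hp => hKb _ _ hα₂.1 (by linarith) hp.2) u gy hm.memL2 hm.wgy
    (fun ε hε => by
      obtain ⟨φ, h1, h2, h3, h4⟩ := happ' ε hε
      exact ⟨φ, h1, h2, h4⟩)
  have e1 : l • ((1:ℝ), (0:ℝ)) = (l, 0) := by simp
  have e2 : l • ((0:ℝ), (1:ℝ)) = (0, l) := by simp
  rw [e1] at r1
  rw [e2] at r2
  rw [integral_add r1.1.integrable_sq r2.1.integrable_sq]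
  linarith [r1.2, r2.2]
end
end
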